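/- arXiv:2309.02858 — 9 statements merged into one kernel-verified Lean document; each statement's English description precedes it below -/
import Mathlib

section
/- In the finite discriminative clustering setup, for every real α > 0 with α ≠ 1, the one-vs-all α-divergence GEMINI satisfies I_α^{ova} := ∑_{k=1}^K π(k) · ∑_{x∈X} p(x) · f_α(c(x,k)/π(k)) ≤ (α(α−1))^{-1} · (−1 + ∑_{k=1}^K π(k)^{2−α}), an upper bound depending only on the cluster proportions. -/
open Finset

/-! The one-vs-all ratio `t = c(·, k) / π(k)` has mean one, so the affine part of `f_α` integrates
out and the divergence of cluster `k` is `(α(α - 1))⁻¹ (π(k)^(-α) 𝔼[c(·, k)^α] - 1)`. For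
`u ∈ [0, 1]` one has `u ^ α ≤ u` when `1 ≤ α` and `u ≤ u ^ α` when `α ≤ 1`; the sign of
`(α(α - 1))⁻¹` changes at `α = 1` too, so in both cases replacing `𝔼[c(·, k)^α]`
by `𝔼[c(·, k)] = π(k)` can only increase the divergence. -/

section AlphaDivergence

open MeasureTheory

/-- The generator `f_α` of the `α`-divergence. It is the intended function only for `0 ≤ t` and
`α ∉ {0, 1}`; division by zero makes it vanish identically for `α = 0` and `α = 1`. -/
noncomputable def alphaDivGenerator (α t : ℝ) : ℝ :=
  (t ^ α - α * t + (α - 1)) / (α * (α - 1))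

lemma inv_mul_rpow_le_inv_mul_self {α u : ℝ} (hα : 0 ≤ α) (hu : u ∈ Set.Icc 0 1) :
    (α * (α - 1))⁻¹ * u ^ α ≤ (α * (α - 1))⁻¹ * u := by
  rcases le_total α 1 with h | h
  · have hsign : (α * (α - 1))⁻¹ ≤ 0 :=
      inv_nonpos.mpr (mul_nonpos_of_nonneg_of_nonpos hα (sub_nonpos.mpr h))
    exact mul_le_mul_of_nonpos_left (Real.self_le_rpow_of_le_one hu.1 hu.2 h) hsign
  · have hsign : 0 ≤ (α * (α - 1))⁻¹ := inv_nonneg.mpr (mul_nonneg hα (sub_nonneg.mpr h))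
    exact mul_le_mul_of_nonneg_left (Real.rpow_le_self_of_le_one hu.1 hu.2 h) hsign

variable {X : Type*} [MeasurableSpace X] {μ : Measure X} {g : X → ℝ} {α : ℝ}

lemma integrable_rpow_of_mem_Icc [IsFiniteMeasure μ] (hα : 0 ≤ α) (hgm : AEMeasurable g μ)
    (hg : ∀ᵐ x ∂μ, g x ∈ Set.Icc 0 1) : Integrable (fun x ↦ g x ^ α) μ :=
  .of_mem_Icc 0 1 (hgm.pow_const α) <| hg.mono fun _ hx ↦
    ⟨Real.rpow_nonneg hx.1 α, Real.rpow_le_one hx.1 hx.2 hα⟩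

lemma inv_mul_integral_rpow_le_inv_mul_integral [IsFiniteMeasure μ] (hα : 0 ≤ α)
    (hgm : AEMeasurable g μ) (hg : ∀ᵐ x ∂μ, g x ∈ Set.Icc 0 1) :
    (α * (α - 1))⁻¹ * ∫ x, g x ^ α ∂μ ≤ (α * (α - 1))⁻¹ * ∫ x, g x ∂μ := by
  rw [← integral_const_mul, ← integral_const_mul]
  exact integral_mono_ae ((integrable_rpow_of_mem_Icc hα hgm hg).const_mul _)
    ((Integrable.of_mem_Icc 0 1 hgm hg).const_mul _)
    (hg.mono fun _ ↦ inv_mul_rpow_le_inv_mul_self hα)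

lemma integral_alphaDivGenerator_of_integral_eq_one [IsProbabilityMeasure μ] {t : X → ℝ}
    (ht : ∫ x, t x ∂μ = 1) (htα : Integrable (fun x ↦ t x ^ α) μ) :
    ∫ x, alphaDivGenerator α (t x) ∂μ = (α * (α - 1))⁻¹ * (∫ x, t x ^ α ∂μ - 1) := by
  have hαt : Integrable (fun x ↦ α * t x) μ :=
    (Integrable.of_integral_ne_zero (ht ▸ one_ne_zero)).const_mul α
  have hsub : Integrable (fun x ↦ t x ^ α - α * t x) μ := htα.sub hαt
  simp only [alphaDivGenerator]
  rw [integral_div, integral_add hsub (integrable_const _), integral_sub htα hαt,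
    integral_const_mul, ht, integral_const, probReal_univ, one_smul]
  ring

lemma integral_mul_integral_alphaDivGenerator_le [IsProbabilityMeasure μ] (hα : 0 ≤ α)
    (hgm : AEMeasurable g μ) (hg : ∀ᵐ x ∂μ, g x ∈ Set.Icc 0 1) (hpos : 0 < ∫ x, g x ∂μ) :
    (∫ x, g x ∂μ) * ∫ x, alphaDivGenerator α (g x / ∫ y, g y ∂μ) ∂μ
      ≤ (α * (α - 1))⁻¹ * ((∫ x, g x ∂μ) ^ (2 - α) - ∫ x, g x ∂μ) := by
  have hbound := inv_mul_integral_rpow_le_inv_mul_integral hα hgm hg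
  have hint := integrable_rpow_of_mem_Icc hα hgm hg
  set m := ∫ x, g x ∂μ with hm
  have hmean : ∫ x, g x / m ∂μ = 1 := by rw [integral_div, ← hm, div_self hpos.ne']
  have hrpow : (fun x ↦ (g x / m) ^ α) =ᵐ[μ] fun x ↦ g x ^ α / m ^ α :=
    hg.mono fun _ hx ↦ Real.div_rpow hx.1 hpos.le α
  have hone : m ^ (1 - α) = m / m ^ α := by rw [Real.rpow_sub hpos, Real.rpow_one]
  have htwo : m ^ (2 - α) = m ^ (1 - α) * m := by
    rw [← Real.rpow_add_one hpos.ne']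
    ring_nf
  calc m * ∫ x, alphaDivGenerator α (g x / m) ∂μ
      = m * ((α * (α - 1))⁻¹ * ((∫ x, g x ^ α ∂μ) / m ^ α - 1)) := by
        rw [integral_alphaDivGenerator_of_integral_eq_one hmean
          ((hint.div_const _).congr hrpow.symm), integral_congr_ae hrpow, integral_div]
    _ = m ^ (1 - α) * ((α * (α - 1))⁻¹ * ∫ x, g x ^ α ∂μ) - (α * (α - 1))⁻¹ * m := by
        rw [hone]
        ring
    _ ≤ m ^ (1 - α) * ((α * (α - 1))⁻¹ * m) - (α * (α - 1))⁻¹ * m := by gcongr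
    _ = (α * (α - 1))⁻¹ * (m ^ (2 - α) - m) := by
        rw [htwo]
        ring

theorem gemini_ova_alpha_div_upper_bound_general [IsProbabilityMeasure μ]
    {ι : Type*} [Fintype ι] {c : X → ι → ℝ} (hcm : ∀ k, AEMeasurable (fun x ↦ c x k) μ)
    (hc : ∀ᵐ x ∂μ, c x ∈ stdSimplex ℝ ι) (hpos : ∀ k, 0 < ∫ x, c x k ∂μ)
    (hα : 0 < α) (_hα1 : α ≠ 1) :
    ∑ k, (∫ x, c x k ∂μ) * ∫ x, alphaDivGenerator α (c x k / ∫ y, c y k ∂μ) ∂μ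
      ≤ (α * (α - 1))⁻¹ * (-1 + ∑ k, (∫ x, c x k ∂μ) ^ (2 - α)) := by
  have hIcc (k : ι) : ∀ᵐ x ∂μ, c x k ∈ Set.Icc 0 1 :=
    hc.mono fun _ hx ↦ mem_Icc_of_mem_stdSimplex hx k
  have htotal : ∑ k, ∫ x, c x k ∂μ = 1 := by
    rw [← integral_finsetSum _ fun k _ ↦ .of_mem_Icc 0 1 (hcm k) (hIcc k),
      integral_congr_ae (hc.mono fun _ hx ↦ hx.2), integral_const, probReal_univ, one_smul]
  calc ∑ k, (∫ x, c x k ∂μ) * ∫ x, alphaDivGenerator α (c x k / ∫ y, c y k ∂μ) ∂μ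
      ≤ ∑ k, (α * (α - 1))⁻¹ * ((∫ x, c x k ∂μ) ^ (2 - α) - ∫ x, c x k ∂μ) :=
        sum_le_sum fun k _ ↦
          integral_mul_integral_alphaDivGenerator_le hα.le (hcm k) (hIcc k) (hpos k)
    _ = (α * (α - 1))⁻¹ * (-1 + ∑ k, (∫ x, c x k ∂μ) ^ (2 - α)) := by
        rw [← mul_sum, sum_sub_distrib, htotal, neg_add_eq_sub]

end AlphaDivergence

lemma exists_pmf_toReal_eq {X : Type*} [Fintype X] {p : X → ℝ} (hp : p ∈ stdSimplex ℝ X) :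
    ∃ P : PMF X, ∀ x, (P x).toReal = p x :=
  ⟨.ofFintype (fun x ↦ ENNReal.ofReal (p x)) <| by
    rw [← ENNReal.ofReal_sum_of_nonneg fun x _ ↦ hp.1 x, hp.2, ENNReal.ofReal_one],
    fun x ↦ ENNReal.toReal_ofReal (hp.1 x)⟩

/-- In the finite discriminative clustering setup, for every real
`α > 0` with `α ≠ 1`, the one-vs-all α-divergence GEMINI is upper bounded by
`(α(α−1))⁻¹ · (−1 + ∑ₖ π(k)^{2−α})`, a bound depending only on the cluster
proportions. -/
theorem gemini_ova_alpha_div_upper_bound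
    {X : Type*} [Fintype X] [Nonempty X]
    (p : X → ℝ) (hp : ∀ x, 0 < p x) (hp1 : ∑ x, p x = 1)
    (K : ℕ) (hK : 0 < K)
    (c : X → Fin K → ℝ) (hc : ∀ x k, 0 ≤ c x k) (hc1 : ∀ x, ∑ k, c x k = 1)
    (pr : Fin K → ℝ) (hpr : ∀ k, pr k = ∑ x, p x * c x k) (hprpos : ∀ k, 0 < pr k)
    (α : ℝ) (hα : 0 < α) (hα1 : α ≠ 1) :
    ∑ k, pr k * ∑ x, p x *
        (((c x k / pr k) ^ α - α * (c x k / pr k) + (α - 1)) / (α * (α - 1)))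
      ≤ (α * (α - 1))⁻¹ * (-1 + ∑ k, pr k ^ (2 - α)) := by
  let : MeasurableSpace X := ⊤
  obtain ⟨P, hP⟩ := exists_pmf_toReal_eq ⟨fun x ↦ (hp x).le, hp1⟩
  have hsum (f : X → ℝ) : ∫ x, f x ∂P.toMeasure = ∑ x, p x * f x := by
    simp only [PMF.integral_eq_sum, hP, smul_eq_mul]
  have hmean (k : Fin K) : ∫ x, c x k ∂P.toMeasure = pr k := (hsum _).trans (hpr k).symm
  have hbound := gemini_ova_alpha_div_upper_bound_general (μ := P.toMeasure) (c := c)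
    (fun _ ↦ measurable_from_top.aemeasurable) (.of_forall fun x ↦ ⟨hc x, hc1 x⟩)
    (fun k ↦ (hprpos k).trans_eq (hmean k).symm) hα hα1
  simpa only [hmean, hsum, alphaDivGenerator] using hbound
end

section
/- In the finite discriminative clustering setup, for α = 2 (the Pearson χ²-divergence), the one-vs-all α-divergence GEMINI satisfies I_2^{ova} := ∑_{k=1}^K π(k) · ∑_{x∈X} p(x) · f_2(c(x,k)/π(k)) ≤ (K−1)/2, an upper bound independent of the cluster proportions; moreover every Dirac model attains I_2^{ova} = (K−1)/2. -/
open Finset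

/-!
Since `f₂ t = (t - 1)² / 2`, the contribution of cluster `k` to the GEMINI is
`π k * 𝔼[f₂ (c k / π k)] = Var[c k] / (2 π k)`. The Bhatia–Davis inequality bounds the variance of a
`[0, 1]`-valued variable of mean `π k` by `π k * (1 - π k)`, with equality when it only takes the
values `0` and `1`. So cluster `k` contributes at most `(1 - π k) / 2`, and the proportions sum
to `1`.
-/

open MeasureTheory ProbabilityTheory

/-- The generator `f₂` of the α-divergence with `α = 2`, which is the Pearson χ²-divergence. -/
noncomputable def pearsonGenerator (t : ℝ) : ℝ :=
  (t ^ 2 - 2 * t + 1) / 2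

theorem pearsonGenerator_eq_sub_one_sq_div_two (t : ℝ) :
    pearsonGenerator t = (t - 1) ^ 2 / 2 := by
  rw [pearsonGenerator]
  ring

section RandomVariable

variable {Ω : Type*} [MeasurableSpace Ω] {μ : Measure Ω} {X : Ω → ℝ}

theorem integral_mul_integral_pearsonGenerator_div_integral
    (hX : AEMeasurable X μ) (hX₀ : μ[X] ≠ 0) :
    μ[X] * ∫ ω, pearsonGenerator (X ω / μ[X]) ∂μ = Var[X; μ] / (2 * μ[X]) := by
  have hgen : ∀ ω, pearsonGenerator (X ω / μ[X]) = (X ω - μ[X]) ^ 2 / (2 * μ[X] ^ 2) := by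
    intro ω
    rw [pearsonGenerator_eq_sub_one_sq_div_two]
    field_simp
  simp_rw [hgen]
  rw [integral_div, ← variance_eq_integral hX]
  field_simp

theorem variance_eq_integral_mul_one_sub_of_ae_eq_zero_or_one [IsProbabilityMeasure μ]
    (hX : AEMeasurable X μ) (hX₀₁ : ∀ᵐ ω ∂μ, X ω = 0 ∨ X ω = 1) :
    Var[X; μ] = μ[X] * (1 - μ[X]) := by
  have hX_mem : ∀ᵐ ω ∂μ, X ω ∈ Set.Icc 0 1 := by
    filter_upwards [hX₀₁] with ω hω
    rcases hω with hω | hω <;> simp [hω]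
  have hX_sq : X ^ 2 =ᵐ[μ] X := by
    filter_upwards [hX₀₁] with ω hω
    rcases hω with hω | hω <;> simp [hω]
  rw [variance_eq_sub (memLp_of_bounded hX_mem hX.aestronglyMeasurable 2),
    integral_congr_ae hX_sq]
  ring

theorem integral_mul_integral_pearsonGenerator_div_integral_le [IsProbabilityMeasure μ]
    (hX : AEMeasurable X μ) (hX_mem : ∀ᵐ ω ∂μ, X ω ∈ Set.Icc 0 1) (hX_pos : 0 < μ[X]) :
    μ[X] * ∫ ω, pearsonGenerator (X ω / μ[X]) ∂μ ≤ (1 - μ[X]) / 2 := by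
  rw [integral_mul_integral_pearsonGenerator_div_integral hX hX_pos.ne']
  calc Var[X; μ] / (2 * μ[X])
      ≤ (1 - μ[X]) * (μ[X] - 0) / (2 * μ[X]) := by
        gcongr
        exact variance_le_sub_mul_sub hX_mem hX
    _ = (1 - μ[X]) / 2 := by field_simp; ring

theorem integral_mul_integral_pearsonGenerator_div_integral_of_ae_eq_zero_or_one
    [IsProbabilityMeasure μ] (hX : AEMeasurable X μ) (hX₀₁ : ∀ᵐ ω ∂μ, X ω = 0 ∨ X ω = 1)
    (hX₀ : μ[X] ≠ 0) :
    μ[X] * ∫ ω, pearsonGenerator (X ω / μ[X]) ∂μ = (1 - μ[X]) / 2 := by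
  rw [integral_mul_integral_pearsonGenerator_div_integral hX hX₀,
    variance_eq_integral_mul_one_sub_of_ae_eq_zero_or_one hX hX₀₁]
  field_simp

end RandomVariable

section Clustering

variable {Ω ι : Type*} [MeasurableSpace Ω] {μ : Measure Ω} {c : Ω → ι → ℝ}

/-- The proportion `π k` of cluster `k`: its mean posterior probability. -/
noncomputable def clusterProportion (μ : Measure Ω) (c : Ω → ι → ℝ) (k : ι) : ℝ :=
  ∫ ω, c ω k ∂μ

variable [Fintype ι]

/-- `c ω k` is the posterior probability that the data point `ω` belongs to cluster `k`, for data
distributed according to `μ`; the constraints on `c` are only imposed `μ`-almost everywhere. -/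
structure IsClusteringPosterior (μ : Measure Ω) (c : Ω → ι → ℝ) : Prop where
  aemeasurable (k : ι) : AEMeasurable (c · k) μ
  ae_nonneg : ∀ᵐ ω ∂μ, ∀ k, 0 ≤ c ω k
  ae_sum_eq_one : ∀ᵐ ω ∂μ, ∑ k, c ω k = 1

/-- The one-vs-all Pearson GEMINI `I₂ᵒᵛᵃ`: the mean over clusters, weighted by their proportions, of
the χ²-divergence between the data distribution of a cluster and the whole data distribution. By
Bayes' rule, the density of the former with respect to the latter is `c ω k / π k`. -/
noncomputable def ovaPearsonGemini (μ : Measure Ω) (c : Ω → ι → ℝ) : ℝ :=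
  ∑ k, clusterProportion μ c k * ∫ ω, pearsonGenerator (c ω k / clusterProportion μ c k) ∂μ

namespace IsClusteringPosterior

theorem ae_mem_Icc (hc : IsClusteringPosterior μ c) (k : ι) :
    ∀ᵐ ω ∂μ, c ω k ∈ Set.Icc 0 1 := by
  filter_upwards [hc.ae_nonneg, hc.ae_sum_eq_one] with ω hnonneg hsum
  exact ⟨hnonneg k, hsum ▸ single_le_sum (fun j _ ↦ hnonneg j) (mem_univ k)⟩

theorem integrable [IsFiniteMeasure μ] (hc : IsClusteringPosterior μ c) (k : ι) :
    Integrable (c · k) μ :=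
  .of_mem_Icc 0 1 (hc.aemeasurable k) (hc.ae_mem_Icc k)

theorem sum_clusterProportion [IsProbabilityMeasure μ] (hc : IsClusteringPosterior μ c) :
    ∑ k, clusterProportion μ c k = 1 := by
  simp_rw [clusterProportion]
  rw [← integral_finsetSum univ fun k _ ↦ hc.integrable k, integral_congr_ae hc.ae_sum_eq_one]
  simp

theorem sum_one_sub_clusterProportion_div_two [IsProbabilityMeasure μ]
    (hc : IsClusteringPosterior μ c) :
    ∑ k, (1 - clusterProportion μ c k) / 2 = ((Fintype.card ι : ℝ) - 1) / 2 := by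
  rw [← sum_div, sum_sub_distrib, hc.sum_clusterProportion]
  simp

end IsClusteringPosterior

theorem gemini_ova_pearson_chi_sq_bound_general [IsProbabilityMeasure μ]
    (hc : IsClusteringPosterior μ c) (hpos : ∀ k, 0 < clusterProportion μ c k) :
    ovaPearsonGemini μ c ≤ ((Fintype.card ι : ℝ) - 1) / 2 ∧
      ((∀ᵐ ω ∂μ, ∀ k, c ω k = 0 ∨ c ω k = 1) →
        ovaPearsonGemini μ c = ((Fintype.card ι : ℝ) - 1) / 2) := by
  rw [← hc.sum_one_sub_clusterProportion_div_two]
  refine ⟨sum_le_sum fun k _ ↦ ?_, fun hDirac ↦ sum_congr rfl fun k _ ↦ ?_⟩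
  · exact integral_mul_integral_pearsonGenerator_div_integral_le
      (hc.aemeasurable k) (hc.ae_mem_Icc k) (hpos k)
  · exact integral_mul_integral_pearsonGenerator_div_integral_of_ae_eq_zero_or_one
      (hc.aemeasurable k) (hDirac.mono fun ω hω ↦ hω k) (hpos k).ne'

end Clustering

theorem exists_isProbabilityMeasure_forall_integral_eq_sum {X : Type*} [Fintype X]
    [MeasurableSpace X] [MeasurableSingletonClass X] {p : X → ℝ} (hp : ∀ x, 0 ≤ p x)
    (hp_sum : ∑ x, p x = 1) :
    ∃ μ : Measure X, IsProbabilityMeasure μ ∧ ∀ f : X → ℝ, ∫ x, f x ∂μ = ∑ x, p x * f x := by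
  have hp_sum_ofReal : ∑ x, ENNReal.ofReal (p x) = 1 := by
    rw [← ENNReal.ofReal_sum_of_nonneg fun x _ ↦ hp x, hp_sum, ENNReal.ofReal_one]
  let P : PMF X := .ofFintype (fun x ↦ ENNReal.ofReal (p x)) hp_sum_ofReal
  refine ⟨P.toMeasure, inferInstance, fun f ↦ ?_⟩
  simp [P, PMF.integral_eq_sum, ENNReal.toReal_ofReal (hp _)]

/-- For `α = 2` (Pearson χ²-divergence), the one-vs-all
α-divergence GEMINI is upper bounded by `(K−1)/2`, independently of the cluster
proportions, and every Dirac model attains this bound. -/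
theorem gemini_ova_pearson_chi_sq_bound
    {X : Type*} [Fintype X] [Nonempty X]
    (p : X → ℝ) (hp : ∀ x, 0 < p x) (hp1 : ∑ x, p x = 1)
    (K : ℕ) (hK : 0 < K)
    (c : X → Fin K → ℝ) (hc : ∀ x k, 0 ≤ c x k) (hc1 : ∀ x, ∑ k, c x k = 1)
    (pr : Fin K → ℝ) (hpr : ∀ k, pr k = ∑ x, p x * c x k) (hprpos : ∀ k, 0 < pr k) :
    (∑ k, pr k * ∑ x, p x *
        (((c x k / pr k) ^ 2 - 2 * (c x k / pr k) + 1) / 2)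
      ≤ ((K : ℝ) - 1) / 2)
    ∧ ((∀ x k, c x k = 0 ∨ c x k = 1) →
      ∑ k, pr k * ∑ x, p x *
          (((c x k / pr k) ^ 2 - 2 * (c x k / pr k) + 1) / 2)
        = ((K : ℝ) - 1) / 2) := by
  let _ : MeasurableSpace X := ⊤
  obtain ⟨μ, _, hμ⟩ := exists_isProbabilityMeasure_forall_integral_eq_sum (fun x ↦ (hp x).le) hp1
  have hposterior : IsClusteringPosterior μ c :=
    ⟨fun k ↦ measurable_from_top.aemeasurable, .of_forall hc, .of_forall hc1⟩
  have hproportion : clusterProportion μ c = pr := funext fun k ↦ (hμ _).trans (hpr k).symm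
  have hgemini : ovaPearsonGemini μ c = ∑ k, pr k * ∑ x, p x *
      (((c x k / pr k) ^ 2 - 2 * (c x k / pr k) + 1) / 2) := by
    simp only [ovaPearsonGemini, hproportion, hμ, pearsonGenerator]
  have hbound := gemini_ova_pearson_chi_sq_bound_general hposterior (hproportion ▸ hprpos)
  rw [hgemini, Fintype.card_fin] at hbound
  exact hbound.imp_right fun h hDirac ↦ h (.of_forall hDirac)
end

section
/- In the finite discriminative clustering setup with K = 2 clusters, for every nonempty uniformly bounded family F of functions X → ℝ that is closed under negation (f ∈ F implies −f ∈ F), the one-vs-all and one-vs-one IPM GEMINIs coincide: ∑_{k=1}^2 π(k)·D_F(q_k, p) = ∑_{a=1}^2 ∑_{b=1}^2 π(a)·π(b)·D_F(q_a, q_b) = 2·π(1)·π(2)·D_F(q_1, q_2). -/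
open Finset

/-!
If `p = π₁ q₁ + π₂ q₂` with `π₁ + π₂ = 1`, then `q₁ - p = π₂ (q₁ - q₂)` and `q₂ - p = π₁ (q₂ - q₁)`.
An integral probability metric depends only on the difference of its arguments, in a positively
homogeneous way, and is symmetric when the test family is closed under negation. Hence each of
the two one-vs-all terms equals `π₁ π₂ D(q₁, q₂)`, and so does each off-diagonal one-vs-one term.
-/

/-- The real-valued `⨆ f ∈ F` ranges over all of `V`, with inner supremum `0` where `f ∉ F`; these
extra zeros are harmless because `g` is nonnegative somewhere on `F`. -/
theorem isLUB_biSup_of_exists_nonneg {V : Type*} {F : Set V} {g : V → ℝ}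
    (hbdd : BddAbove (g '' F)) (hnonneg : ∃ f ∈ F, 0 ≤ g f) :
    IsLUB (g '' F) (⨆ f ∈ F, g f) := by
  obtain ⟨f, hf, hgf⟩ := hnonneg
  have hlub : IsLUB (g '' F) (⨆ f : F, g f) := isLUB_ciSup_set hbdd ⟨f, hf⟩
  have hsup_nonneg : 0 ≤ ⨆ f : F, g f := hgf.trans (hlub.1 (Set.mem_image_of_mem g hf))
  rwa [← ciSup_subtype_fun (by rwa [← Set.image_eq_range]) (by rwa [Real.sSup_empty])]

/-- `D` is the integral probability metric on `E` with test functions `F`, where `B μ f` is the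
integral of `f` against `μ`, so that `E` can be any space of signed measures. Asking for a least
upper bound instead of setting `D` equal to a supremum avoids the junk values of `sSup` on empty
or unbounded sets of reals. -/
def IsIPM {E V : Type*} [AddCommGroup E] [Module ℝ E] [AddCommGroup V] [Module ℝ V]
    (B : E →ₗ[ℝ] V →ₗ[ℝ] ℝ) (F : Set V) (D : E → E → ℝ) : Prop :=
  ∀ r s, IsLUB (B (r - s) '' F) (D r s)

namespace IsIPM

variable {E V : Type*} [AddCommGroup E] [Module ℝ E] [AddCommGroup V] [Module ℝ V]
  {B : E →ₗ[ℝ] V →ₗ[ℝ] ℝ} {F : Set V} {D : E → E → ℝ}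

theorem eq_mul_of_sub_eq_smul (hD : IsIPM B F D) {t : ℝ} (ht : 0 ≤ t) {r s u v : E}
    (h : r - s = t • (u - v)) : D r s = t * D u v := by
  have hlub : IsLUB (B (r - s) '' F) (t * D u v) := by
    simpa only [h, map_smul, LinearMap.smul_apply, smul_eq_mul, Set.image_image]
      using (hD u v).mul_left ht
  exact (hD r s).unique hlub

theorem self_eq_zero (hD : IsIPM B F D) (r : E) : D r r = 0 := by
  simpa only [zero_mul] using
    hD.eq_mul_of_sub_eq_smul le_rfl (show r - r = (0 : ℝ) • (r - r) by rw [sub_self, smul_zero])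

theorem comm (hD : IsIPM B F D) (hneg : ∀ f ∈ F, -f ∈ F) (r s : E) : D r s = D s r := by
  have himage_subset (r s : E) : B (r - s) '' F ⊆ B (s - r) '' F := by
    rintro _ ⟨f, hf, rfl⟩
    exact ⟨-f, hneg f hf, by rw [map_neg, ← LinearMap.neg_apply, ← map_neg, neg_sub]⟩
  exact le_antisymm ((hD r s).mono (hD s r) (himage_subset r s))
    ((hD s r).mono (hD r s) (himage_subset s r))

theorem left_mixture (hD : IsIPM B F D) {a b : ℝ} (hb : 0 ≤ b) (hab : a + b = 1) (u v : E) :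
    D u (a • u + b • v) = b * D u v :=
  hD.eq_mul_of_sub_eq_smul hb <| by
    rw [eq_sub_of_add_eq hab]
    module

theorem right_mixture (hD : IsIPM B F D) {a b : ℝ} (ha : 0 ≤ a) (hab : a + b = 1) (u v : E) :
    D v (a • u + b • v) = a * D v u := by
  rw [add_comm, hD.left_mixture ha (by rwa [add_comm])]

theorem biSup (hne : F.Nonempty) (hbdd : ∀ r, BddAbove (B r '' F)) (hneg : ∀ f ∈ F, -f ∈ F) :
    IsIPM B F fun r s => ⨆ f ∈ F, B (r - s) f := by
  intro r s
  obtain ⟨f, hf⟩ := hne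
  refine isLUB_biSup_of_exists_nonneg (hbdd _) ?_
  rcases le_total 0 (B (r - s) f) with hpos | hnonpos
  · exact ⟨f, hf, hpos⟩
  · exact ⟨-f, hneg f hf, by rwa [map_neg, neg_nonneg]⟩

end IsIPM

theorem bddAbove_dotProduct_image {X : Type*} [Fintype X] {F : Set (X → ℝ)}
    (hF : ∃ M, ∀ f ∈ F, ∀ x, |f x| ≤ M) (r : X → ℝ) : BddAbove ((r ⬝ᵥ ·) '' F) := by
  obtain ⟨M, hM⟩ := hF
  refine ⟨∑ x, |r x| * M, ?_⟩
  rintro _ ⟨f, hf, rfl⟩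
  refine Finset.sum_le_sum fun x _ => (le_abs_self _).trans ?_
  rw [abs_mul]
  exact mul_le_mul_of_nonneg_left (hM f hf x) (abs_nonneg _)

theorem isIPM_biSup_sum_sub_sum {X : Type*} [Fintype X] {F : Set (X → ℝ)} (hne : F.Nonempty)
    (hbdd : ∃ M, ∀ f ∈ F, ∀ x, |f x| ≤ M) (hneg : ∀ f ∈ F, -f ∈ F) :
    IsIPM (dotProductBilin ℝ ℝ) F
      fun r s => ⨆ f ∈ F, (∑ x, r x * f x - ∑ x, s x * f x) := by
  have hpairing (r s f : X → ℝ) :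
      ∑ x, r x * f x - ∑ x, s x * f x = dotProductBilin ℝ ℝ (r - s) f :=
    (sub_dotProduct r s f).symm
  simpa only [hpairing] using IsIPM.biSup hne (bddAbove_dotProduct_image hbdd) hneg

section ClusterPosterior

variable {X κ : Type*} [Fintype κ] {p : X → ℝ} {c : X → κ → ℝ}

theorem sum_clusterProportion [Fintype X] (hc : ∀ x, ∑ k, c x k = 1) :
    ∑ k, ∑ x, p x * c x k = ∑ x, p x := by
  rw [Finset.sum_comm]
  simp only [← Finset.mul_sum, hc, mul_one]

theorem sum_smul_clusterConditional (hc : ∀ x, ∑ k, c x k = 1) {w : κ → ℝ} (hw : ∀ k, w k ≠ 0)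
    {q : κ → X → ℝ} (hq : ∀ k x, q k x = p x * c x k / w k) : ∑ k, w k • q k = p := by
  ext x
  simp only [Finset.sum_apply, Pi.smul_apply, smul_eq_mul, hq, mul_div_cancel₀ _ (hw _),
    ← Finset.mul_sum, hc, mul_one]

end ClusterPosterior

theorem gemini_ova_eq_ovo_ipm_binary_general
    {E V : Type*} [AddCommGroup E] [Module ℝ E] [AddCommGroup V] [Module ℝ V]
    {B : E →ₗ[ℝ] V →ₗ[ℝ] ℝ} {F : Set V} {D : E → E → ℝ}
    (hD : IsIPM B F D) (hneg : ∀ f ∈ F, -f ∈ F)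
    {w : Fin 2 → ℝ} (hw : ∀ k, 0 ≤ w k) (hw1 : ∑ k, w k = 1)
    {q : Fin 2 → E} {p : E} (hp : ∑ k, w k • q k = p) :
    (∑ k, w k * D (q k) p = ∑ a, ∑ b, w a * w b * D (q a) (q b))
    ∧ (∑ a, ∑ b, w a * w b * D (q a) (q b) = 2 * w 0 * w 1 * D (q 0) (q 1)) := by
  subst hp
  rw [Fin.sum_univ_two] at hw1
  simp only [Fin.sum_univ_two, hD.left_mixture (hw 1) hw1, hD.right_mixture (hw 0) hw1,
    hD.self_eq_zero, hD.comm hneg (q 1) (q 0)]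
  constructor <;> ring

/-- In the finite discriminative clustering setup with `K = 2`
clusters, for every nonempty uniformly bounded family `F` closed under negation,
the one-vs-all and one-vs-one IPM GEMINIs coincide, and both equal
`2·π(1)·π(2)·D_F(q₁, q₂)`. -/
theorem gemini_ova_eq_ovo_ipm_binary
    {X : Type*} [Fintype X] [Nonempty X]
    (p : X → ℝ) (hp : ∀ x, 0 < p x) (hp1 : ∑ x, p x = 1)
    (c : X → Fin 2 → ℝ) (hc : ∀ x k, 0 ≤ c x k) (hc1 : ∀ x, ∑ k, c x k = 1)
    (pr : Fin 2 → ℝ) (hpr : ∀ k, pr k = ∑ x, p x * c x k) (hprpos : ∀ k, 0 < pr k)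
    (q : Fin 2 → X → ℝ) (hq : ∀ k x, q k x = p x * c x k / pr k)
    (F : Set (X → ℝ)) (hFne : F.Nonempty)
    (hFbd : ∃ M, ∀ f ∈ F, ∀ x, |f x| ≤ M)
    (hFneg : ∀ f ∈ F, (fun x => -f x) ∈ F)
    (D : (X → ℝ) → (X → ℝ) → ℝ)
    (hD : ∀ r s, D r s = ⨆ f ∈ F, (∑ x, r x * f x - ∑ x, s x * f x)) :
    (∑ k, pr k * D (q k) p = ∑ a, ∑ b, pr a * pr b * D (q a) (q b))
    ∧ (∑ a, ∑ b, pr a * pr b * D (q a) (q b) = 2 * pr 0 * pr 1 * D (q 0) (q 1)) := by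
  obtain rfl : D = fun r s => ⨆ f ∈ F, (∑ x, r x * f x - ∑ x, s x * f x) := funext₂ hD
  have hpr1 : ∑ k, pr k = 1 := by simp only [hpr, sum_clusterProportion hc1, hp1]
  exact gemini_ova_eq_ovo_ipm_binary_general (isIPM_biSup_sum_sub_sum hFne hFbd hFneg) hFneg
    (fun k => (hprpos k).le) hpr1 (sum_smul_clusterConditional hc1 (fun k => (hprpos k).ne') hq)
end

section
/- In the finite discriminative clustering setup, let f : [0,∞) → ℝ be convex with f(1) = 0 and suppose L = lim_{t→∞} f(t)/t exists in ℝ. Then the one-vs-one f-divergence GEMINI satisfies ∑_{a=1}^K ∑_{b=1}^K π(a)·π(b)·D_f(q_a‖q_b) ≤ (f(0)+L) · ∑_{k=1}^K π(k)·(1−π(k)); in particular, for balanced proportions π(k) = 1/K the bound is (1 − 1/K)·(f(0)+L). Moreover, if the cluster-conditional distributions have pairwise disjoint supports (for all a ≠ b and all x, c(x,a)·c(x,b) = 0), then equality holds. -/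
open Finset

/-!
Convexity makes the chord slope `(f t - f 0) / t` nondecreasing, so its limit `L` bounds it and
`f t ≤ f 0 + L * t`. Inserting `t = r x / s x` and summing against `s` gives
`D_f(r‖s) ≤ f 0 + L` for probability vectors, with equality when `r` and `s` have disjoint supports
because every ratio is then `0` or has denominator `0`. The diagonal terms of the one-vs-one sum
vanish since `f 1 = 0`, and the off-diagonal weights `π a * π b` add up to `∑ k, π k * (1 - π k)`.
-/

namespace FDivGemini

lemma le_add_mul_of_convexOn_of_tendsto_div {f : ℝ → ℝ} {L t : ℝ}
    (hf : ConvexOn ℝ (Set.Ici 0) f)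
    (hL : Filter.Tendsto (fun t => f t / t) Filter.atTop (nhds L)) (ht : 0 ≤ t) :
    f t ≤ f 0 + L * t := by
  obtain rfl | ht := ht.eq_or_lt
  · simp
  have slope_tendsto : Filter.Tendsto (slope f 0) Filter.atTop (nhds L) := by
    simpa only [slope_fun_def_field, sub_div, sub_zero, id] using
      hL.sub (Filter.tendsto_id.const_div_atTop (f 0))
  have slope_le : slope f 0 t ≤ L := by
    refine ge_of_tendsto slope_tendsto ?_
    filter_upwards [Filter.eventually_ge_atTop t] with T hT
    have hT0 : 0 < T := ht.trans_le hT
    exact hf.slope_mono Set.self_mem_Ici ⟨ht.le, ht.ne'⟩ ⟨hT0.le, hT0.ne'⟩ hT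
  rw [slope_def_field, sub_zero, div_le_iff₀ ht] at slope_le
  linarith

section FDiv

variable {X : Type*} [Fintype X] {f : ℝ → ℝ} {L : ℝ} {r s : X → ℝ}

/-- The `f`-divergence `D_f(r‖s)` of nonnegative vectors on a finite type, where `L` is the price
per unit of the mass of `r` at points to which `s` gives none. -/
noncomputable def fDiv (f : ℝ → ℝ) (L : ℝ) (r s : X → ℝ) : ℝ :=
  ∑ x with 0 < s x, s x * f (r x / s x) + L * ∑ x with s x = 0, r x

lemma fDiv_eq_sum_ite (hs : ∀ x, 0 ≤ s x) :
    fDiv f L r s = ∑ x, if 0 < s x then s x * f (r x / s x) else L * r x := by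
  have not_pos_iff (x : X) : ¬ 0 < s x ↔ s x = 0 := by
    rw [not_lt, (hs x).ge_iff_eq']
  simp only [fDiv, sum_ite, not_pos_iff, mul_sum]

lemma fDiv_self (hf1 : f 1 = 0) (hs : ∀ x, 0 ≤ s x) : fDiv f L s s = 0 := by
  rw [fDiv_eq_sum_ite hs]
  refine sum_eq_zero fun x _ => ?_
  split_ifs with hx
  · rw [div_self hx.ne', hf1, mul_zero]
  · rw [le_antisymm (not_lt.1 hx) (hs x), mul_zero]

lemma fDiv_le (hf : ConvexOn ℝ (Set.Ici 0) f)
    (hL : Filter.Tendsto (fun t => f t / t) Filter.atTop (nhds L))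
    (hr : ∀ x, 0 ≤ r x) (hs : ∀ x, 0 ≤ s x) :
    fDiv f L r s ≤ f 0 * ∑ x, s x + L * ∑ x, r x := by
  rw [fDiv_eq_sum_ite hs, mul_sum, mul_sum, ← sum_add_distrib]
  refine sum_le_sum fun x _ => ?_
  split_ifs with hx
  · calc s x * f (r x / s x)
        ≤ s x * (f 0 + L * (r x / s x)) := by
          gcongr
          exact le_add_mul_of_convexOn_of_tendsto_div hf hL (div_nonneg (hr x) hx.le)
      _ = f 0 * s x + L * r x := by field_simp
  · rw [le_antisymm (not_lt.1 hx) (hs x), mul_zero, zero_add]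

lemma fDiv_eq_of_mul_eq_zero (hs : ∀ x, 0 ≤ s x) (hrs : ∀ x, r x * s x = 0) :
    fDiv f L r s = f 0 * ∑ x, s x + L * ∑ x, r x := by
  rw [fDiv_eq_sum_ite hs, mul_sum, mul_sum, ← sum_add_distrib]
  refine sum_congr rfl fun x _ => ?_
  split_ifs with hx
  · have hrx : r x = 0 := (mul_eq_zero.1 (hrs x)).resolve_right hx.ne'
    rw [hrx, zero_div, mul_zero, add_zero, mul_comm]
  · rw [le_antisymm (not_lt.1 hx) (hs x), mul_zero, zero_add]

end FDiv

section Weights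

variable {ι R : Type*} [Fintype ι] [CommRing R] {w : ι → R}

lemma sum_sum_mul_ite_eq [DecidableEq ι] (hw : ∑ i, w i = 1) (C : R) :
    ∑ i, ∑ j, w i * w j * (if i = j then 0 else C) = C * ∑ i, w i * (1 - w i) := by
  have off_diagonal (i : ι) : ∑ j, w j * (if i = j then 0 else C) = (1 - w i) * C := by
    simp only [mul_ite, mul_zero, ← ite_not (p := i = _), ← sum_filter, ← sum_mul]
    rw [filter_ne, sum_erase_eq_sub (mem_univ i), hw]
  simp only [mul_assoc, ← mul_sum, off_diagonal]
  rw [mul_sum]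
  exact sum_congr rfl fun i _ => by ring

lemma sum_mul_one_sub_of_forall_eq (hw : ∑ i, w i = 1) {u : R} (hu : ∀ i, w i = u) :
    ∑ i, w i * (1 - w i) = 1 - u := by
  calc ∑ i, w i * (1 - w i) = ∑ i, w i * (1 - u) := by simp only [hu]
    _ = 1 - u := by rw [← sum_mul, hw, one_mul]

end Weights

section OvoGemini

variable {X ι : Type*} [Fintype X] [Fintype ι] {f : ℝ → ℝ} {L : ℝ} {w : ι → ℝ} {q : ι → X → ℝ}

/-- The one-vs-one `f`-divergence GEMINI of a finite family of distributions `q` weighted by the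
proportions `w`. -/
noncomputable def ovoGemini (f : ℝ → ℝ) (L : ℝ) (w : ι → ℝ) (q : ι → X → ℝ) : ℝ :=
  ∑ a, ∑ b, w a * w b * fDiv f L (q a) (q b)

lemma ovoGemini_le (hf : ConvexOn ℝ (Set.Ici 0) f) (hf1 : f 1 = 0)
    (hL : Filter.Tendsto (fun t => f t / t) Filter.atTop (nhds L))
    (hw : w ∈ stdSimplex ℝ ι) (hq : ∀ k, q k ∈ stdSimplex ℝ X) :
    ovoGemini f L w q ≤ (f 0 + L) * ∑ k, w k * (1 - w k) := by
  classical
  rw [← sum_sum_mul_ite_eq hw.2]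
  refine sum_le_sum fun a _ => sum_le_sum fun b _ =>
    mul_le_mul_of_nonneg_left ?_ (mul_nonneg (hw.1 a) (hw.1 b))
  split_ifs with hab
  · rw [hab, fDiv_self hf1 (hq b).1]
  · simpa [(hq a).2, (hq b).2] using fDiv_le hf hL (hq a).1 (hq b).1

lemma ovoGemini_eq_of_mul_eq_zero (hf1 : f 1 = 0) (hw : ∑ k, w k = 1)
    (hq : ∀ k, q k ∈ stdSimplex ℝ X) (hdisj : ∀ a b, a ≠ b → ∀ x, q a x * q b x = 0) :
    ovoGemini f L w q = (f 0 + L) * ∑ k, w k * (1 - w k) := by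
  classical
  rw [← sum_sum_mul_ite_eq hw]
  refine sum_congr rfl fun a _ => sum_congr rfl fun b _ => congrArg _ ?_
  split_ifs with hab
  · rw [hab, fDiv_self hf1 (hq b).1]
  · simpa [(hq a).2, (hq b).2] using fDiv_eq_of_mul_eq_zero (hq b).1 (hdisj a b hab)

end OvoGemini

section StdSimplex

variable {X ι 𝕜 : Type*} [Fintype X] [Fintype ι]

lemma sum_mul_mem_stdSimplex [Semiring 𝕜] [PartialOrder 𝕜] [IsOrderedRing 𝕜] {p : X → 𝕜}
    {c : X → ι → 𝕜} (hp : p ∈ stdSimplex 𝕜 X) (hc : ∀ x, c x ∈ stdSimplex 𝕜 ι) :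
    (fun k => ∑ x, p x * c x k) ∈ stdSimplex 𝕜 ι := by
  refine ⟨fun k => sum_nonneg fun x _ => mul_nonneg (hp.1 x) ((hc x).1 k), ?_⟩
  rw [sum_comm]
  simp only [← mul_sum, (hc _).2, mul_one, hp.2]

lemma div_sum_mem_stdSimplex [Field 𝕜] [LinearOrder 𝕜] [IsStrictOrderedRing 𝕜] {g : X → 𝕜}
    (hg : ∀ x, 0 ≤ g x) (hsum : ∑ x, g x ≠ 0) :
    (fun x => g x / ∑ y, g y) ∈ stdSimplex 𝕜 X :=
  ⟨fun x => div_nonneg (hg x) (sum_nonneg fun y _ => hg y), by rw [← sum_div, div_self hsum]⟩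

end StdSimplex

end FDivGemini

open FDivGemini

theorem gemini_ovo_fdiv_upper_bound_general {X ι : Type*} [Fintype X] [Fintype ι]
    {w : ι → ℝ} (hw : w ∈ stdSimplex ℝ ι) {q : ι → X → ℝ} (hq : ∀ k, q k ∈ stdSimplex ℝ X)
    {f : ℝ → ℝ} (hf : ConvexOn ℝ (Set.Ici 0) f) (hf1 : f 1 = 0)
    {L : ℝ} (hL : Filter.Tendsto (fun t => f t / t) Filter.atTop (nhds L)) :
    ovoGemini f L w q ≤ (f 0 + L) * ∑ k, w k * (1 - w k)
    ∧ ((∀ k, w k = 1 / Fintype.card ι) →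
        (f 0 + L) * ∑ k, w k * (1 - w k) = (1 - 1 / (Fintype.card ι : ℝ)) * (f 0 + L))
    ∧ ((∀ a b, a ≠ b → ∀ x, q a x * q b x = 0) →
        ovoGemini f L w q = (f 0 + L) * ∑ k, w k * (1 - w k)) :=
  ⟨ovoGemini_le hf hf1 hL hw hq,
    fun hbal => by rw [sum_mul_one_sub_of_forall_eq hw.2 hbal, mul_comm],
    ovoGemini_eq_of_mul_eq_zero hf1 hw.2 hq⟩

/-- In the finite discriminative clustering setup, for convex
`f : [0,∞) → ℝ` with `f(1) = 0` and `L = lim_{t→∞} f(t)/t ∈ ℝ`, the one-vs-one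
f-divergence GEMINI is upper bounded by `(f(0)+L)·∑ₖ π(k)(1−π(k))`; for balanced
proportions this bound is `(1−1/K)(f(0)+L)`; and pairwise disjoint supports of the
cluster-conditional distributions imply equality. -/
theorem gemini_ovo_fdiv_upper_bound
    {X : Type*} [Fintype X] [Nonempty X]
    (p : X → ℝ) (hp : ∀ x, 0 < p x) (hp1 : ∑ x, p x = 1)
    (K : ℕ) (hK : 0 < K)
    (c : X → Fin K → ℝ) (hc : ∀ x k, 0 ≤ c x k) (hc1 : ∀ x, ∑ k, c x k = 1)
    (pr : Fin K → ℝ) (hpr : ∀ k, pr k = ∑ x, p x * c x k) (hprpos : ∀ k, 0 < pr k)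
    (q : Fin K → X → ℝ) (hq : ∀ k x, q k x = p x * c x k / pr k)
    (f : ℝ → ℝ) (hf : ConvexOn ℝ (Set.Ici 0) f) (hf1 : f 1 = 0)
    (L : ℝ) (hL : Filter.Tendsto (fun t => f t / t) Filter.atTop (nhds L))
    (D : (X → ℝ) → (X → ℝ) → ℝ)
    (hD : ∀ r s, D r s =
      ∑ x ∈ Finset.univ.filter (fun x => 0 < s x), s x * f (r x / s x)
        + L * ∑ x ∈ Finset.univ.filter (fun x => s x = 0), r x) :
    (∑ a, ∑ b, pr a * pr b * D (q a) (q b)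
        ≤ (f 0 + L) * ∑ k, pr k * (1 - pr k))
    ∧ ((∀ k, pr k = 1 / K) →
        (f 0 + L) * ∑ k, pr k * (1 - pr k) = (1 - 1 / (K : ℝ)) * (f 0 + L))
    ∧ ((∀ a b, a ≠ b → ∀ x, c x a * c x b = 0) →
        ∑ a, ∑ b, pr a * pr b * D (q a) (q b)
          = (f 0 + L) * ∑ k, pr k * (1 - pr k)) := by
  obtain rfl : D = fDiv f L := funext₂ hD
  have hpr_mem : pr ∈ stdSimplex ℝ (Fin K) :=
    funext hpr ▸ sum_mul_mem_stdSimplex ⟨fun x => (hp x).le, hp1⟩ fun x => ⟨hc x, hc1 x⟩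
  have hq_mem (k : Fin K) : q k ∈ stdSimplex ℝ X := by
    rw [funext (hq k), hpr]
    exact div_sum_mem_stdSimplex (fun x => mul_nonneg (hp x).le (hc x k)) (hpr k ▸ (hprpos k).ne')
  obtain ⟨h_le, h_balanced, h_eq⟩ := gemini_ovo_fdiv_upper_bound_general hpr_mem hq_mem hf hf1 hL
  refine ⟨h_le, by simpa only [Fintype.card_fin] using h_balanced, fun hdisj => h_eq ?_⟩
  intro a b hab x
  rw [hq, hq, div_mul_div_comm, mul_mul_mul_comm, hdisj a b hab x, mul_zero, zero_div]
end

section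
/- In the finite discriminative clustering setup, let f : [0,∞) → ℝ be convex with f(1) = 0, suppose L = lim_{t→∞} f(t)/t exists in ℝ, and suppose f(0) + L > 0. If the one-vs-one f-divergence GEMINI attains its upper bound, i.e. ∑_{a=1}^K ∑_{b=1}^K π(a)·π(b)·D_f(q_a‖q_b) = (f(0)+L) · ∑_{k=1}^K π(k)·(1−π(k)), then the cluster-conditional distributions have pairwise disjoint supports: for all a ≠ b and all x ∈ X, c(x,a)·c(x,b) = 0. -/
open Finset

/-!
Since `f` is convex, the secant slopes `(f t - f 0) / t` increase to `L`, so the graph of `f` lies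
below the line `t ↦ f 0 + L * t`. The excess of `f` over this line is a convex function with its
maximum `0` at the endpoint `0`; it is negative at `1` because `f 1 = 0 < f 0 + L`, hence negative
on all of `(0, ∞)`. Therefore each summand of `D_f(r‖s)` is at most `f 0 * s x + L * r x`, with
equality exactly where `r x * s x = 0`, and `D_f(r‖s) ≤ f 0 + L` with equality exactly for disjoint
supports. The diagonal divergences vanish, so the GEMINI attains its bound exactly when every
off-diagonal divergence equals `f 0 + L`.
-/

section AsymptoticSlope

open Filter Topology

variable {f : ℝ → ℝ} {a L t : ℝ}

lemma le_add_mul_sub_of_tendsto_div (hf : ConvexOn ℝ (Set.Ici a) f)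
    (hL : Tendsto (fun t => f t / t) atTop (𝓝 L)) (ht : a ≤ t) :
    f t ≤ f a + L * (t - a) := by
  obtain rfl | hat := ht.eq_or_lt
  · simp
  have div_tendsto_zero (y : ℝ) : Tendsto (fun s => y / s) atTop (𝓝 0) :=
    tendsto_const_nhds.div_atTop tendsto_id
  have slope_tendsto : Tendsto (fun s => (f s - f a) / (s - a)) atTop (𝓝 L) := by
    have h : Tendsto (fun s => (f s / s - f a / s) / (1 - a / s)) atTop
        (𝓝 ((L - 0) / (1 - 0))) :=
      (hL.sub (div_tendsto_zero _)).div (tendsto_const_nhds.sub (div_tendsto_zero _)) (by simp)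
    simp only [sub_zero, div_one] at h
    refine h.congr' ?_
    filter_upwards [eventually_ne_atTop 0] with s hs
    rw [← sub_div, one_sub_div hs, div_div_div_cancel_right₀ hs]
  have slope_le : (f t - f a) / (t - a) ≤ L := by
    refine ge_of_tendsto slope_tendsto ?_
    filter_upwards [eventually_ge_atTop t] with s hts
    exact hf.secant_mono Set.self_mem_Ici ht (ht.trans hts) hat.ne' (hat.trans_le hts).ne' hts
  linarith [(div_le_iff₀ (sub_pos.2 hat)).1 slope_le]

lemma lt_left_endpoint_of_convexOn_Ici {g : ℝ → ℝ} {b : ℝ} (hg : ConvexOn ℝ (Set.Ici a) g)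
    (hmax : ∀ s, a ≤ s → g s ≤ g a) (hab : a < b) (hb : g b < g a) (ht : a < t) :
    g t < g a := by
  by_contra! hat
  have hbt : g b < g t := hb.trans_le hat
  obtain h | rfl | h := lt_trichotomy t b
  · have ht_mem : t ∈ openSegment ℝ b a := by
      rw [openSegment_symm, openSegment_eq_Ioo hab]
      exact ⟨ht, h⟩
    exact (hg.lt_right_of_left_lt hab.le Set.self_mem_Ici ht_mem hbt).not_ge hat
  · exact hbt.false
  · have ht_mem : t ∈ openSegment ℝ b (t + 1) := by
      rw [openSegment_eq_Ioo (by linarith)]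
      exact ⟨h, lt_add_one t⟩
    have hat1 : a ≤ t + 1 := by linarith
    exact ((hg.lt_right_of_left_lt hab.le hat1 ht_mem hbt).trans_le (hmax _ hat1)).not_ge hat

lemma lt_add_mul_sub_of_tendsto_div {b : ℝ} (hf : ConvexOn ℝ (Set.Ici a) f)
    (hL : Tendsto (fun t => f t / t) atTop (𝓝 L)) (hab : a < b)
    (hb : f b < f a + L * (b - a)) (ht : a < t) :
    f t < f a + L * (t - a) := by
  have hg : ConvexOn ℝ (Set.Ici a) fun s => f s + -L * s :=
    hf.add ((-L • LinearMap.id : ℝ →ₗ[ℝ] ℝ).convexOn (convex_Ici a))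
  have := lt_left_endpoint_of_convexOn_Ici hg
    (fun s hs => by linarith [le_add_mul_sub_of_tendsto_div hf hL hs]) hab (by linarith) ht
  linarith

end AsymptoticSlope

section Perspective

variable {f : ℝ → ℝ} {L r s : ℝ}

/-- The perspective `s * f (r / s)` of `f`, extended to `s ≤ 0` by `L * r`, which is its limit as
`s` decreases to `0` when `L` is the asymptotic slope of `f` and `0 ≤ r`. It is the summand of the
`f`-divergence. -/
noncomputable def perspective (f : ℝ → ℝ) (L r s : ℝ) : ℝ :=
  if 0 < s then s * f (r / s) else L * r

lemma perspective_le (hf : ∀ t, 0 ≤ t → f t ≤ f 0 + L * t) (hr : 0 ≤ r) (hs : 0 ≤ s) :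
    perspective f L r s ≤ f 0 * s + L * r := by
  obtain rfl | hs := hs.eq_or_lt
  · simp [perspective]
  calc perspective f L r s = s * f (r / s) := if_pos hs
    _ ≤ s * (f 0 + L * (r / s)) := by gcongr; exact hf _ (by positivity)
    _ = f 0 * s + L * r := by field_simp

lemma perspective_lt (hf : ∀ t, 0 < t → f t < f 0 + L * t) (hr : 0 < r) (hs : 0 < s) :
    perspective f L r s < f 0 * s + L * r := by
  calc perspective f L r s = s * f (r / s) := if_pos hs
    _ < s * (f 0 + L * (r / s)) := by gcongr; exact hf _ (by positivity)
    _ = f 0 * s + L * r := by field_simp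

lemma perspective_eq_iff (hf : ∀ t, 0 < t → f t < f 0 + L * t) (hr : 0 ≤ r) (hs : 0 ≤ s) :
    perspective f L r s = f 0 * s + L * r ↔ r * s = 0 := by
  obtain rfl | hs := hs.eq_or_lt
  · simp [perspective]
  obtain rfl | hr := hr.eq_or_lt
  · simp [perspective, hs, mul_comm]
  exact iff_of_false (perspective_lt hf hr hs).ne (mul_pos hr hs).ne'

end Perspective

section FDiv

variable {X : Type*} [Fintype X] {f : ℝ → ℝ} {L : ℝ} {r s : X → ℝ}

/-- The `f`-divergence `D_f(r‖s)` of two mass functions on a finite type, where `L` stands for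
`lim f t / t` and weighs the mass of `r` outside the support of `s`. -/
noncomputable def fDiv (f : ℝ → ℝ) (L : ℝ) (r s : X → ℝ) : ℝ :=
  ∑ x with 0 < s x, s x * f (r x / s x) + L * ∑ x with s x = 0, r x

lemma fDiv_eq_sum_perspective (hs : ∀ x, 0 ≤ s x) :
    fDiv f L r s = ∑ x, perspective f L (r x) (s x) := by
  have hs_iff (x : X) : s x = 0 ↔ ¬ 0 < s x := by rw [not_lt, (hs x).ge_iff_eq']
  simp only [fDiv, perspective, sum_ite, mul_sum, hs_iff]

lemma fDiv_self (hf1 : f 1 = 0) : fDiv f L r r = 0 := by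
  have hpos : ∑ x with 0 < r x, r x * f (r x / r x) = 0 :=
    sum_eq_zero fun x hx => by rw [div_self (mem_filter.1 hx).2.ne', hf1, mul_zero]
  have hzero : ∑ x with r x = 0, r x = 0 := sum_eq_zero fun x hx => (mem_filter.1 hx).2
  rw [fDiv, hpos, hzero, mul_zero, add_zero]

lemma sum_mul_add_mul_of_sum_eq_one (u v : ℝ) (hr1 : ∑ x, r x = 1) (hs1 : ∑ x, s x = 1) :
    ∑ x, (u * s x + v * r x) = u + v := by
  rw [sum_add_distrib, ← mul_sum, ← mul_sum, hr1, hs1, mul_one, mul_one]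

lemma fDiv_le (hf : ∀ t, 0 ≤ t → f t ≤ f 0 + L * t) (hr : ∀ x, 0 ≤ r x) (hs : ∀ x, 0 ≤ s x)
    (hr1 : ∑ x, r x = 1) (hs1 : ∑ x, s x = 1) : fDiv f L r s ≤ f 0 + L := by
  rw [fDiv_eq_sum_perspective hs, ← sum_mul_add_mul_of_sum_eq_one (f 0) L hr1 hs1]
  exact sum_le_sum fun x _ => perspective_le hf (hr x) (hs x)

lemma fDiv_eq_iff (hf : ∀ t, 0 < t → f t < f 0 + L * t) (hr : ∀ x, 0 ≤ r x)
    (hs : ∀ x, 0 ≤ s x) (hr1 : ∑ x, r x = 1) (hs1 : ∑ x, s x = 1) :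
    fDiv f L r s = f 0 + L ↔ ∀ x, r x * s x = 0 := by
  have hf_le (t : ℝ) (ht : 0 ≤ t) : f t ≤ f 0 + L * t := by
    obtain rfl | ht := ht.eq_or_lt
    · simp
    · exact (hf t ht).le
  rw [fDiv_eq_sum_perspective hs, ← sum_mul_add_mul_of_sum_eq_one (f 0) L hr1 hs1,
    sum_eq_sum_iff_of_le fun x _ => perspective_le hf_le (hr x) (hs x)]
  simp only [mem_univ, true_imp_iff, perspective_eq_iff hf (hr _) (hs _)]

end FDiv

section WeightedPairs

variable {ι R : Type*} [Fintype ι] [CommRing R] {w : ι → R}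

lemma sum_mul_one_sub_eq_sum_erase [DecidableEq ι] (hw1 : ∑ k, w k = 1) :
    ∑ k, w k * (1 - w k) = ∑ a, ∑ b ∈ univ.erase a, w a * w b := by
  refine sum_congr rfl fun a _ => ?_
  rw [← mul_sum, sum_erase_eq_sub (mem_univ a), hw1]

lemma sum_sum_mul_eq_iff_of_le [LinearOrder R] [IsStrictOrderedRing R] (hw : ∀ k, 0 < w k)
    (hw1 : ∑ k, w k = 1) {M : ι → ι → R} {B : R} (hdiag : ∀ a, M a a = 0)
    (hle : Pairwise fun a b => M a b ≤ B) :
    ∑ a, ∑ b, w a * w b * M a b = B * ∑ k, w k * (1 - w k) ↔ Pairwise fun a b => M a b = B := by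
  classical
  have drop_diag (a : ι) : ∑ b, w a * w b * M a b = ∑ b ∈ univ.erase a, w a * w b * M a b :=
    (sum_erase univ (by rw [hdiag, mul_zero])).symm
  have term_le (a b : ι) (hb : b ∈ univ.erase a) : w a * w b * M a b ≤ w a * w b * B :=
    mul_le_mul_of_nonneg_left (hle (ne_of_mem_erase hb).symm) (mul_pos (hw a) (hw b)).le
  have term_eq_iff (a b : ι) : w a * w b * M a b = w a * w b * B ↔ M a b = B :=
    mul_right_inj' (mul_pos (hw a) (hw b)).ne'
  simp only [drop_diag, sum_mul_one_sub_eq_sum_erase hw1, mul_comm B, sum_mul]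
  rw [sum_eq_sum_iff_of_le fun a _ => sum_le_sum (term_le a)]
  simp only [sum_eq_sum_iff_of_le (term_le _), term_eq_iff, mem_univ, mem_erase, and_true,
    true_imp_iff, ne_comm, Pairwise]

end WeightedPairs

/-- The one-vs-one `f`-divergence GEMINI of the distributions `q k` with proportions `w k`. -/
noncomputable def ovoGemini {X ι : Type*} [Fintype X] [Fintype ι] (f : ℝ → ℝ) (L : ℝ)
    (w : ι → ℝ) (q : ι → X → ℝ) : ℝ :=
  ∑ a, ∑ b, w a * w b * fDiv f L (q a) (q b)

theorem gemini_ovo_fdiv_tight_implies_disjoint_general {X ι : Type*} [Fintype X] [Fintype ι]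
    {w : ι → ℝ} (hw : ∀ k, 0 < w k) (hw1 : ∑ k, w k = 1)
    {q : ι → X → ℝ} (hq : ∀ k x, 0 ≤ q k x) (hq1 : ∀ k, ∑ x, q k x = 1)
    {f : ℝ → ℝ} (hf : ConvexOn ℝ (Set.Ici 0) f) (hf1 : f 1 = 0)
    {L : ℝ} (hL : Filter.Tendsto (fun t => f t / t) Filter.atTop (nhds L))
    (hfL : 0 < f 0 + L) :
    ovoGemini f L w q = (f 0 + L) * ∑ k, w k * (1 - w k) ↔
      Pairwise fun a b => ∀ x, q a x * q b x = 0 := by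
  have hf_le (t : ℝ) (ht : 0 ≤ t) : f t ≤ f 0 + L * t := by
    simpa using le_add_mul_sub_of_tendsto_div hf hL ht
  have hf_lt (t : ℝ) (ht : 0 < t) : f t < f 0 + L * t := by
    simpa using lt_add_mul_sub_of_tendsto_div hf hL zero_lt_one (by simpa [hf1] using hfL) ht
  rw [ovoGemini, sum_sum_mul_eq_iff_of_le hw hw1 (fun _ => fDiv_self hf1)
    fun a b _ => fDiv_le hf_le (hq a) (hq b) (hq1 a) (hq1 b)]
  simp only [fDiv_eq_iff hf_lt (hq _) (hq _) (hq1 _) (hq1 _)]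

/-- In the finite discriminative clustering setup, for convex
`f : [0,∞) → ℝ` with `f(1) = 0`, `L = lim_{t→∞} f(t)/t ∈ ℝ`, and `f(0)+L > 0`,
if the one-vs-one f-divergence GEMINI attains its upper bound
`(f(0)+L)·∑ₖ π(k)(1−π(k))`, then the cluster-conditional distributions have
pairwise disjoint supports. -/
theorem gemini_ovo_fdiv_tight_implies_disjoint
    {X : Type*} [Fintype X] [Nonempty X]
    (p : X → ℝ) (hp : ∀ x, 0 < p x) (hp1 : ∑ x, p x = 1)
    (K : ℕ) (hK : 0 < K)
    (c : X → Fin K → ℝ) (hc : ∀ x k, 0 ≤ c x k) (hc1 : ∀ x, ∑ k, c x k = 1)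
    (pr : Fin K → ℝ) (hpr : ∀ k, pr k = ∑ x, p x * c x k) (hprpos : ∀ k, 0 < pr k)
    (q : Fin K → X → ℝ) (hq : ∀ k x, q k x = p x * c x k / pr k)
    (f : ℝ → ℝ) (hf : ConvexOn ℝ (Set.Ici 0) f) (hf1 : f 1 = 0)
    (L : ℝ) (hL : Filter.Tendsto (fun t => f t / t) Filter.atTop (nhds L))
    (hfL : 0 < f 0 + L)
    (D : (X → ℝ) → (X → ℝ) → ℝ)
    (hD : ∀ r s, D r s =
      ∑ x ∈ Finset.univ.filter (fun x => 0 < s x), s x * f (r x / s x)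
        + L * ∑ x ∈ Finset.univ.filter (fun x => s x = 0), r x)
    (heq : ∑ a, ∑ b, pr a * pr b * D (q a) (q b)
        = (f 0 + L) * ∑ k, pr k * (1 - pr k)) :
    ∀ a b, a ≠ b → ∀ x, c x a * c x b = 0 := by
  obtain rfl : D = fDiv f L := funext₂ hD
  have hpr1 : ∑ k, pr k = 1 := by
    simp only [hpr]
    rw [sum_comm]
    simp only [← mul_sum, hc1, mul_one, hp1]
  have hq0 (k : Fin K) (x : X) : 0 ≤ q k x := by
    rw [hq]
    exact div_nonneg (mul_nonneg (hp x).le (hc x k)) (hprpos k).le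
  have hq1 (k : Fin K) : ∑ x, q k x = 1 := by
    simp only [hq, ← sum_div, ← hpr, div_self (hprpos k).ne']
  intro a b hab x
  have hqab : q a x * q b x = 0 :=
    (gemini_ovo_fdiv_tight_implies_disjoint_general hprpos hpr1 hq0 hq1 hf hf1 hL hfL).1 heq hab x
  simpa [hq, (hp x).ne', (hprpos _).ne'] using hqab
end

section
/- Let X be a nonempty finite set, f : [0,∞) → ℝ convex with f(1) = 0, and suppose L = lim_{t→∞} f(t)/t exists in ℝ. For any probability mass functions r, s on X: (i) 0 ≤ D_f(r‖s) ≤ f(0) + L; (ii) if r and s have disjoint supports (r(x)·s(x) = 0 for all x), then D_f(r‖s) = f(0) + L; (iii) if f(0) + L > 0 and D_f(r‖s) = f(0) + L, then r and s have disjoint supports. -/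
open Finset

/-!
Write `D_f(r‖s) = ∑ x, P (r x) (s x)`, where `P a b = b f(a / b)` is the perspective of `f`,
extended by `P a 0 = L a`. Convexity and the growth rate `L` make `P` subadditive on the quadrant,
and all three claims come from splitting pairs:
* summing over `x` gives `0 = f(1) = P 1 1 ≤ D_f(r‖s)`;
* `(a, b) = (a, 0) + (0, b)` gives `P a b ≤ f(0) b + L a`, with equality if `a = 0` or `b = 0`;
* splitting off `(m, m)` with `m = min a b` first improves this bound by `(f(0) + L - f(1)) m`, so
  equality of the sums forces `∑ x, min (r x) (s x) = 0`.
-/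

section ConvexFunction

variable {f : ℝ → ℝ} {L : ℝ}

lemma tendsto_slope_atTop_of_tendsto_div
    (hL : Filter.Tendsto (fun t => f t / t) Filter.atTop (nhds L)) (x : ℝ) :
    Filter.Tendsto (slope f x) Filter.atTop (nhds L) := by
  have hinv : Filter.Tendsto (fun t : ℝ => t⁻¹) Filter.atTop (nhds 0) := tendsto_inv_atTop_zero
  have hquot : Filter.Tendsto (fun t => (f t / t - f x * t⁻¹) / (1 - x * t⁻¹)) Filter.atTop
      (nhds ((L - f x * 0) / (1 - x * 0))) :=
    (hL.sub (hinv.const_mul (f x))).div (tendsto_const_nhds.sub (hinv.const_mul x)) (by simp)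
  rw [mul_zero, mul_zero, sub_zero, sub_zero, div_one] at hquot
  refine hquot.congr' ?_
  filter_upwards [Filter.eventually_ne_atTop 0] with t ht
  rw [slope_def_field, ← div_div_div_cancel_right₀ ht (f t - f x), sub_div (f t), sub_div t,
    div_self ht, div_eq_mul_inv (f x), div_eq_mul_inv x]

lemma apply_le_add_mul_sub_of_tendsto_div {c x y : ℝ} (hf : ConvexOn ℝ (Set.Ici c) f)
    (hL : Filter.Tendsto (fun t => f t / t) Filter.atTop (nhds L)) (hx : c ≤ x) (hxy : x ≤ y) :
    f y ≤ f x + L * (y - x) := by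
  obtain rfl | hlt := hxy.eq_or_lt
  · simp
  have hslope : slope f x y ≤ L := by
    refine ge_of_tendsto (tendsto_slope_atTop_of_tendsto_div hL x) ?_
    filter_upwards [Filter.eventually_ge_atTop y] with t hyt
    exact hf.slope_mono hx ⟨hx.trans hxy, hlt.ne'⟩
      ⟨hx.trans (hxy.trans hyt), (hlt.trans_le hyt).ne'⟩ hyt
  rw [slope_def_field, div_le_iff₀ (sub_pos.mpr hlt)] at hslope
  linarith

lemma mul_apply_add_div_add_le {S : Set ℝ} {a a' b b' : ℝ} (hf : ConvexOn ℝ S f)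
    (hab : a / b ∈ S) (hab' : a' / b' ∈ S) (hb : 0 < b) (hb' : 0 < b') :
    (b + b') * f ((a + a') / (b + b')) ≤ b * f (a / b) + b' * f (a' / b') := by
  have hsum : 0 < b + b' := add_pos hb hb'
  have hconv := (convexOn_iff_div.mp hf).2 hab hab' hb.le hb'.le hsum
  simp only [smul_eq_mul] at hconv
  have hmean : b / (b + b') * (a / b) + b' / (b + b') * (a' / b') = (a + a') / (b + b') := by
    field_simp
  rw [hmean] at hconv
  calc (b + b') * f ((a + a') / (b + b'))
      ≤ (b + b') * (b / (b + b') * f (a / b) + b' / (b + b') * f (a' / b')) := by gcongr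
    _ = b * f (a / b) + b' * f (a' / b') := by field_simp

end ConvexFunction

/-- The perspective `b * f (a / b)` of `f`, extended to `b = 0` by its limit `L * a`, where `L` is
the limit of `f t / t` at infinity; it is meant for `0 ≤ a` and `0 ≤ b`. -/
noncomputable def extendedPerspective (f : ℝ → ℝ) (L a b : ℝ) : ℝ :=
  if b = 0 then L * a else b * f (a / b)

section Perspective

variable (f : ℝ → ℝ) (L : ℝ)

lemma extendedPerspective_zero_right (a : ℝ) : extendedPerspective f L a 0 = L * a :=
  if_pos rfl

lemma extendedPerspective_of_ne_zero (a : ℝ) {b : ℝ} (hb : b ≠ 0) :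
    extendedPerspective f L a b = b * f (a / b) :=
  if_neg hb

lemma extendedPerspective_zero_left (b : ℝ) : extendedPerspective f L 0 b = f 0 * b := by
  obtain rfl | hb := eq_or_ne b 0
  · simp [extendedPerspective_zero_right]
  · rw [extendedPerspective_of_ne_zero f L 0 hb, zero_div, mul_comm]

lemma extendedPerspective_self (a : ℝ) : extendedPerspective f L a a = f 1 * a := by
  obtain rfl | ha := eq_or_ne a 0
  · simp [extendedPerspective_zero_right]
  · rw [extendedPerspective_of_ne_zero f L a ha, div_self ha, mul_comm]

variable {f L} {a a' b b' : ℝ}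

lemma extendedPerspective_add_left_le (hf : ConvexOn ℝ (Set.Ici 0) f)
    (hL : Filter.Tendsto (fun t => f t / t) Filter.atTop (nhds L))
    (ha : 0 ≤ a) (ha' : 0 ≤ a') (hb : 0 ≤ b) :
    extendedPerspective f L (a + a') b ≤ extendedPerspective f L a b + L * a' := by
  obtain rfl | hb := hb.eq_or_lt
  · simp only [extendedPerspective_zero_right, mul_add, le_refl]
  have hgrowth : f ((a + a') / b) ≤ f (a / b) + L * ((a + a') / b - a / b) :=
    apply_le_add_mul_sub_of_tendsto_div hf hL (by positivity) (by gcongr; linarith)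
  rw [extendedPerspective_of_ne_zero f L _ hb.ne', extendedPerspective_of_ne_zero f L _ hb.ne']
  calc b * f ((a + a') / b) ≤ b * (f (a / b) + L * ((a + a') / b - a / b)) := by gcongr
    _ = b * f (a / b) + L * a' := by field_simp; ring

lemma extendedPerspective_add_le (hf : ConvexOn ℝ (Set.Ici 0) f)
    (hL : Filter.Tendsto (fun t => f t / t) Filter.atTop (nhds L))
    (ha : 0 ≤ a) (ha' : 0 ≤ a') (hb : 0 ≤ b) (hb' : 0 ≤ b') :
    extendedPerspective f L (a + a') (b + b') ≤
      extendedPerspective f L a b + extendedPerspective f L a' b' := by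
  obtain rfl | hb'_pos := hb'.eq_or_lt
  · rw [add_zero, extendedPerspective_zero_right]
    exact extendedPerspective_add_left_le hf hL ha ha' hb
  obtain rfl | hb_pos := hb.eq_or_lt
  · rw [zero_add, extendedPerspective_zero_right, add_comm a, add_comm (L * a)]
    exact extendedPerspective_add_left_le hf hL ha' ha hb'
  · rw [extendedPerspective_of_ne_zero f L _ (add_pos hb_pos hb'_pos).ne',
      extendedPerspective_of_ne_zero f L _ hb_pos.ne',
      extendedPerspective_of_ne_zero f L _ hb'_pos.ne']
    exact mul_apply_add_div_add_le hf (div_nonneg ha hb) (div_nonneg ha' hb') hb_pos hb'_pos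

lemma extendedPerspective_le (hf : ConvexOn ℝ (Set.Ici 0) f)
    (hL : Filter.Tendsto (fun t => f t / t) Filter.atTop (nhds L)) (ha : 0 ≤ a) (hb : 0 ≤ b) :
    extendedPerspective f L a b ≤ f 0 * b + L * a := by
  simpa only [zero_add, extendedPerspective_zero_left] using
    extendedPerspective_add_left_le hf hL le_rfl ha hb

lemma extendedPerspective_le_sub_min (hf : ConvexOn ℝ (Set.Ici 0) f)
    (hL : Filter.Tendsto (fun t => f t / t) Filter.atTop (nhds L)) (ha : 0 ≤ a) (hb : 0 ≤ b) :
    extendedPerspective f L a b ≤ f 0 * b + L * a - (f 0 + L - f 1) * min a b := by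
  set m := min a b
  have hm : 0 ≤ m := le_min ha hb
  have hma : 0 ≤ a - m := sub_nonneg.mpr (min_le_left a b)
  have hmb : 0 ≤ b - m := sub_nonneg.mpr (min_le_right a b)
  calc extendedPerspective f L a b
      = extendedPerspective f L (m + (a - m)) (m + (b - m)) := by
        rw [add_sub_cancel, add_sub_cancel]
    _ ≤ extendedPerspective f L m m + extendedPerspective f L (a - m) (b - m) :=
        extendedPerspective_add_le hf hL hm hma hm hmb
    _ ≤ f 1 * m + (f 0 * (b - m) + L * (a - m)) := by
        rw [extendedPerspective_self]
        gcongr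
        exact extendedPerspective_le hf hL hma hmb
    _ = f 0 * b + L * a - (f 0 + L - f 1) * m := by ring

lemma extendedPerspective_eq_of_mul_eq_zero (hab : a * b = 0) :
    extendedPerspective f L a b = f 0 * b + L * a := by
  obtain rfl | rfl := mul_eq_zero.mp hab
  · rw [extendedPerspective_zero_left, mul_zero, add_zero]
  · rw [extendedPerspective_zero_right, mul_zero, zero_add]

end Perspective

/-- The extended `f`-divergence `D_f(r‖s)` of nonnegative functions on a finite type, as a sum of
perspectives; `L` is the limit of `f t / t` at infinity. -/
noncomputable def extendedFDiv {X : Type*} [Fintype X] (f : ℝ → ℝ) (L : ℝ) (r s : X → ℝ) : ℝ :=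
  ∑ x, extendedPerspective f L (r x) (s x)

section FDiv

variable {X : Type*} [Fintype X] {f : ℝ → ℝ} {L : ℝ} {r s : X → ℝ}

lemma extendedFDiv_eq_sum_filter (hs : ∀ x, 0 ≤ s x) :
    extendedFDiv f L r s = ∑ x ∈ univ.filter (fun x => 0 < s x), s x * f (r x / s x)
      + L * ∑ x ∈ univ.filter (fun x => s x = 0), r x := by
  simp only [extendedFDiv, extendedPerspective, sum_ite, mul_sum, (hs _).lt_iff_ne']
  exact add_comm _ _

lemma extendedPerspective_sum_le_extendedFDiv (hf : ConvexOn ℝ (Set.Ici 0) f)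
    (hL : Filter.Tendsto (fun t => f t / t) Filter.atTop (nhds L))
    (hr : ∀ x, 0 ≤ r x) (hs : ∀ x, 0 ≤ s x) :
    extendedPerspective f L (∑ x, r x) (∑ x, s x) ≤ extendedFDiv f L r s := by
  have hsub := le_sum_of_subadditive_on_pred (fun p : ℝ × ℝ => extendedPerspective f L p.1 p.2)
    (fun p => 0 ≤ p) (by simp [extendedPerspective_zero_right])
    (fun p q hp hq => extendedPerspective_add_le hf hL hp.1 hq.1 hp.2 hq.2)
    (fun _ _ => add_nonneg) (fun x => (r x, s x)) (s := univ) (fun x _ => ⟨hr x, hs x⟩)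
  simpa only [extendedFDiv, Prod.fst_sum, Prod.snd_sum] using hsub

lemma extendedFDiv_le (hf : ConvexOn ℝ (Set.Ici 0) f)
    (hL : Filter.Tendsto (fun t => f t / t) Filter.atTop (nhds L))
    (hr : ∀ x, 0 ≤ r x) (hs : ∀ x, 0 ≤ s x) :
    extendedFDiv f L r s ≤ f 0 * ∑ x, s x + L * ∑ x, r x := by
  rw [mul_sum, mul_sum, ← sum_add_distrib]
  exact sum_le_sum fun x _ => extendedPerspective_le hf hL (hr x) (hs x)

lemma extendedFDiv_le_sub_sum_min (hf : ConvexOn ℝ (Set.Ici 0) f)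
    (hL : Filter.Tendsto (fun t => f t / t) Filter.atTop (nhds L))
    (hr : ∀ x, 0 ≤ r x) (hs : ∀ x, 0 ≤ s x) :
    extendedFDiv f L r s ≤
      f 0 * ∑ x, s x + L * ∑ x, r x - (f 0 + L - f 1) * ∑ x, min (r x) (s x) := by
  rw [mul_sum, mul_sum, mul_sum, ← sum_add_distrib, ← sum_sub_distrib]
  exact sum_le_sum fun x _ => extendedPerspective_le_sub_min hf hL (hr x) (hs x)

lemma extendedFDiv_eq_of_disjoint_support (hrs : ∀ x, r x * s x = 0) :
    extendedFDiv f L r s = f 0 * ∑ x, s x + L * ∑ x, r x := by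
  rw [mul_sum, mul_sum, ← sum_add_distrib]
  exact sum_congr rfl fun x _ => extendedPerspective_eq_of_mul_eq_zero (hrs x)

lemma disjoint_support_of_extendedFDiv_eq (hf : ConvexOn ℝ (Set.Ici 0) f)
    (hL : Filter.Tendsto (fun t => f t / t) Filter.atTop (nhds L))
    (hr : ∀ x, 0 ≤ r x) (hs : ∀ x, 0 ≤ s x) (hpos : f 1 < f 0 + L)
    (heq : extendedFDiv f L r s = f 0 * ∑ x, s x + L * ∑ x, r x) (x : X) : r x * s x = 0 := by
  have hmin : ∀ x ∈ univ, 0 ≤ min (r x) (s x) := fun x _ => le_min (hr x) (hs x)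
  have hgap : (f 0 + L - f 1) * ∑ x, min (r x) (s x) ≤ 0 := by
    linarith [extendedFDiv_le_sub_sum_min hf hL hr hs]
  have hsum : ∑ x, min (r x) (s x) = 0 :=
    (nonpos_of_mul_nonpos_right hgap (sub_pos.mpr hpos)).antisymm (sum_nonneg hmin)
  rw [← min_mul_max, (sum_eq_zero_iff_of_nonneg hmin).mp hsum x (mem_univ x), zero_mul]

end FDiv

theorem extended_fdiv_bounds_and_disjoint_support_general
    {X : Type*} [Fintype X]
    (f : ℝ → ℝ) (hf : ConvexOn ℝ (Set.Ici 0) f)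
    (L : ℝ) (hL : Filter.Tendsto (fun t => f t / t) Filter.atTop (nhds L))
    (r s : X → ℝ) (hr0 : ∀ x, 0 ≤ r x) (hs0 : ∀ x, 0 ≤ s x)
    (D : ℝ)
    (hD : D = ∑ x ∈ Finset.univ.filter (fun x => 0 < s x), s x * f (r x / s x)
        + L * ∑ x ∈ Finset.univ.filter (fun x => s x = 0), r x) :
    (extendedPerspective f L (∑ x, r x) (∑ x, s x) ≤ D
      ∧ D ≤ f 0 * ∑ x, s x + L * ∑ x, r x)
    ∧ ((∀ x, r x * s x = 0) → D = f 0 * ∑ x, s x + L * ∑ x, r x)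
    ∧ (f 1 < f 0 + L → D = f 0 * ∑ x, s x + L * ∑ x, r x → ∀ x, r x * s x = 0) := by
  rw [← extendedFDiv_eq_sum_filter hs0] at hD
  subst hD
  exact ⟨⟨extendedPerspective_sum_le_extendedFDiv hf hL hr0 hs0, extendedFDiv_le hf hL hr0 hs0⟩,
    extendedFDiv_eq_of_disjoint_support, disjoint_support_of_extendedFDiv_eq hf hL hr0 hs0⟩

/-- For convex `f : [0,∞) → ℝ` with `f(1) = 0` and
`L = lim_{t→∞} f(t)/t ∈ ℝ`, and pmfs `r, s` on a nonempty finite set: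
(i) `0 ≤ D_f(r‖s) ≤ f(0)+L`; (ii) disjoint supports imply `D_f(r‖s) = f(0)+L`;
(iii) if `f(0)+L > 0` and `D_f(r‖s) = f(0)+L`, then the supports are disjoint. -/
theorem extended_fdiv_bounds_and_disjoint_support
    {X : Type*} [Fintype X] [Nonempty X]
    (f : ℝ → ℝ) (hf : ConvexOn ℝ (Set.Ici 0) f) (hf1 : f 1 = 0)
    (L : ℝ) (hL : Filter.Tendsto (fun t => f t / t) Filter.atTop (nhds L))
    (r s : X → ℝ) (hr0 : ∀ x, 0 ≤ r x) (hs0 : ∀ x, 0 ≤ s x)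
    (hr1 : ∑ x, r x = 1) (hs1 : ∑ x, s x = 1)
    (D : ℝ)
    (hD : D = ∑ x ∈ Finset.univ.filter (fun x => 0 < s x), s x * f (r x / s x)
        + L * ∑ x ∈ Finset.univ.filter (fun x => s x = 0), r x) :
    (0 ≤ D ∧ D ≤ f 0 + L)
    ∧ ((∀ x, r x * s x = 0) → D = f 0 + L)
    ∧ (0 < f 0 + L → D = f 0 + L → ∀ x, r x * s x = 0) := by
  simpa only [hr1, hs1, hf1, extendedPerspective_self, zero_mul, mul_one] using
    extended_fdiv_bounds_and_disjoint_support_general f hf L hL r s hr0 hs0 D hD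
end

section
/- Let μ be a probability measure on a measurable space Ω, β ∈ (0,1), A ⊆ Ω measurable with μ(A) = 1/2, and B ⊆ Ω measurable with μ(B) = β. Then the difference of mutual informations of the two sharp-boundary models converges as the boundaries turn sharper: lim_{ε→0⁺} (I_A(ε) − I_B(ε)) = log 2 + β·log β + (1−β)·log(1−β), i.e. the limit equals log 2 minus the binary entropy of β. In particular, if β = 1/2, the two models have the same mutual information in the limit. -/
open MeasureTheory Filter

/-
With `H` the binary entropy, a posterior `η` with values in `[0, 1]` carries mutual information
`H (∫ η) - ∫ H ∘ η`. The clustering posterior takes only the values `1 - ε` and `ε`, so the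
symmetry `H (1 - ε) = H ε` makes the conditional entropy constant and
`I_S(ε) = H (π_S) - H ε`, which is continuous in `ε` and equals `H (μ S)` at `ε = 0`.
-/

open Real Set Topology

section BinaryEntropy

variable {p q : ℝ}

lemma mul_log_div_eq_sub (h : q = 0 → p = 0) : p * log (p / q) = p * log p - p * log q := by
  by_cases hp : p = 0
  · simp [hp]
  · rw [log_div hp (mt h hp), mul_sub]

lemma bernoulli_relativeEntropy_eq (h₀ : q = 0 → p = 0) (h₁ : q = 1 → p = 1) :
    p * log (p / q) + (1 - p) * log ((1 - p) / (1 - q)) =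
      -(p * log q + (1 - p) * log (1 - q)) - binEntropy p := by
  have h₁' : 1 - q = 0 → 1 - p = 0 := fun h => sub_eq_zero.2 (h₁ (sub_eq_zero.1 h).symm).symm
  rw [mul_log_div_eq_sub h₀, mul_log_div_eq_sub h₁']
  simp only [binEntropy_eq_negMulLog_add_negMulLog_one_sub, negMulLog]
  ring

end BinaryEntropy

/-- The mutual information, in nats, between `x ∼ μ` and a binary label that equals `1` with
conditional probability `η x`: the mean relative entropy of the posterior `η x` with respect to
the marginal `∫ η ∂μ`. -/
noncomputable def posteriorMutualInfo {Ω : Type*} [MeasurableSpace Ω] (μ : Measure Ω)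
    (η : Ω → ℝ) : ℝ :=
  ∫ x, (η x * log (η x / ∫ y, η y ∂μ)
    + (1 - η x) * log ((1 - η x) / (1 - ∫ y, η y ∂μ))) ∂μ

section PosteriorMutualInfo

variable {Ω : Type*} [MeasurableSpace Ω] {μ : Measure Ω} {η : Ω → ℝ}

lemma ae_eq_one_of_integral_eq_one [IsProbabilityMeasure μ] (hη : Integrable η μ)
    (hle : ∀ᵐ x ∂μ, η x ≤ 1) (h : ∫ x, η x ∂μ = 1) : ∀ᵐ x ∂μ, η x = 1 := by
  have hnonneg : 0 ≤ᵐ[μ] fun x => 1 - η x := hle.mono fun x hx => sub_nonneg.2 hx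
  have hzero : ∫ x, (1 - η x) ∂μ = 0 := by
    simp [integral_sub (integrable_const 1) hη, h]
  filter_upwards [(integral_eq_zero_iff_of_nonneg_ae hnonneg
    ((integrable_const 1).sub hη)).1 hzero] with x hx
  exact (sub_eq_zero.1 hx).symm

lemma integrable_binEntropy_comp [IsFiniteMeasure μ] (hη : AEMeasurable η μ)
    (h01 : ∀ᵐ x ∂μ, η x ∈ Icc (0 : ℝ) 1) : Integrable (fun x => binEntropy (η x)) μ := by
  refine .of_mem_Icc 0 (log 2) (binEntropy_continuous.measurable.comp_aemeasurable hη) ?_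
  filter_upwards [h01] with x hx
  exact ⟨binEntropy_nonneg hx.1 hx.2, binEntropy_le_log_two⟩

variable [IsProbabilityMeasure μ]

theorem posteriorMutualInfo_eq_binEntropy_sub (hη : AEMeasurable η μ)
    (h01 : ∀ᵐ x ∂μ, η x ∈ Icc (0 : ℝ) 1) :
    posteriorMutualInfo μ η = binEntropy (∫ x, η x ∂μ) - ∫ x, binEntropy (η x) ∂μ := by
  have hint : Integrable η μ := .of_mem_Icc 0 1 hη h01
  set q := ∫ x, η x ∂μ with hq
  have hint' : Integrable (fun x => 1 - η x) μ := (integrable_const 1).sub hint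
  have hzero : ∀ᵐ x ∂μ, q = 0 → η x = 0 := eventually_imp_distrib_left.2
    (integral_eq_zero_iff_of_nonneg_ae (h01.mono fun x hx => hx.1) hint).1
  have hone : ∀ᵐ x ∂μ, q = 1 → η x = 1 := eventually_imp_distrib_left.2
    (ae_eq_one_of_integral_eq_one hint (h01.mono fun x hx => hx.2))
  have hcross_int : Integrable (fun x => η x * log q + (1 - η x) * log (1 - q)) μ :=
    (hint.mul_const _).add (hint'.mul_const _)
  have hcross : ∫ x, (η x * log q + (1 - η x) * log (1 - q)) ∂μ =
      q * log q + (1 - q) * log (1 - q) := by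
    rw [integral_add (hint.mul_const _) (hint'.mul_const _), integral_mul_const,
      integral_mul_const, integral_sub (integrable_const 1) hint]
    simp [hq]
  calc posteriorMutualInfo μ η
      = ∫ x, (-(η x * log q + (1 - η x) * log (1 - q)) - binEntropy (η x)) ∂μ := by
        refine integral_congr_ae ?_
        filter_upwards [hzero, hone] with x hx₀ hx₁ using bernoulli_relativeEntropy_eq hx₀ hx₁
    _ = -∫ x, (η x * log q + (1 - η x) * log (1 - q)) ∂μ - ∫ x, binEntropy (η x) ∂μ := by
        rw [integral_sub hcross_int.fun_neg (integrable_binEntropy_comp hη h01), integral_neg]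
    _ = binEntropy q - ∫ x, binEntropy (η x) ∂μ := by
        rw [hcross, binEntropy_eq_negMulLog_add_negMulLog_one_sub, negMulLog, negMulLog]
        ring

end PosteriorMutualInfo

/-- The posterior of the two-cluster model with sharp boundary set `S`: the label `1` has
probability `1 - ε` on `S` and `ε` off `S`. -/
noncomputable def clusteringPosterior {Ω : Type*} (ε : ℝ) (S : Set Ω) (x : Ω) : ℝ :=
  (1 - ε) * S.indicator 1 x + ε * Sᶜ.indicator 1 x

section ClusteringPosterior

variable {Ω : Type*} {S : Set Ω} {ε : ℝ}

lemma clusteringPosterior_of_mem {x : Ω} (hx : x ∈ S) : clusteringPosterior ε S x = 1 - ε := by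
  simp [clusteringPosterior, hx]

lemma clusteringPosterior_of_notMem {x : Ω} (hx : x ∉ S) : clusteringPosterior ε S x = ε := by
  simp [clusteringPosterior, hx]

lemma clusteringPosterior_mem_Icc (hε : ε ∈ Icc (0 : ℝ) 1) (x : Ω) :
    clusteringPosterior ε S x ∈ Icc (0 : ℝ) 1 := by
  by_cases hx : x ∈ S
  · rw [clusteringPosterior_of_mem hx]
    exact Icc.mem_iff_one_sub_mem.1 hε
  · rwa [clusteringPosterior_of_notMem hx]

lemma binEntropy_clusteringPosterior (x : Ω) :
    binEntropy (clusteringPosterior ε S x) = binEntropy ε := by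
  by_cases hx : x ∈ S
  · rw [clusteringPosterior_of_mem hx, binEntropy_one_sub]
  · rw [clusteringPosterior_of_notMem hx]

variable [MeasurableSpace Ω] {μ : Measure Ω}

lemma aemeasurable_clusteringPosterior (hS : NullMeasurableSet S μ) :
    AEMeasurable (clusteringPosterior ε S) μ :=
  ((aemeasurable_one.indicator₀ hS).const_mul _).add
    ((aemeasurable_one.indicator₀ hS.compl).const_mul _)

variable [IsProbabilityMeasure μ]

lemma integral_clusteringPosterior (hS : NullMeasurableSet S μ) :
    ∫ x, clusteringPosterior ε S x ∂μ = (1 - ε) * μ.real S + ε * (1 - μ.real S) := by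
  have hind {T : Set Ω} (hT : NullMeasurableSet T μ) : Integrable (T.indicator (1 : Ω → ℝ)) μ :=
    (integrable_const (1 : ℝ)).indicator₀ hT
  simp only [clusteringPosterior]
  rw [integral_add ((hind hS).const_mul _) ((hind hS.compl).const_mul _), integral_const_mul,
    integral_const_mul, integral_indicator₀ hS, integral_indicator₀ hS.compl]
  simp [probReal_compl_eq_one_sub₀ hS]

theorem posteriorMutualInfo_clusteringPosterior (hS : NullMeasurableSet S μ)
    (hε : ε ∈ Icc (0 : ℝ) 1) :
    posteriorMutualInfo μ (clusteringPosterior ε S) =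
      binEntropy ((1 - ε) * μ.real S + ε * (1 - μ.real S)) - binEntropy ε := by
  rw [posteriorMutualInfo_eq_binEntropy_sub (aemeasurable_clusteringPosterior hS)
    (ae_of_all μ (clusteringPosterior_mem_Icc hε)), integral_clusteringPosterior hS]
  simp [binEntropy_clusteringPosterior]

theorem tendsto_posteriorMutualInfo_clusteringPosterior (hS : NullMeasurableSet S μ) :
    Tendsto (fun ε => posteriorMutualInfo μ (clusteringPosterior ε S)) (𝓝[>] 0)
      (𝓝 (binEntropy (μ.real S))) := by
  have hcont : Continuous fun ε : ℝ =>
      binEntropy ((1 - ε) * μ.real S + ε * (1 - μ.real S)) - binEntropy ε := by fun_prop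
  have hlim := (hcont.tendsto 0).mono_left (nhdsWithin_le_nhds (s := Ioi 0))
  simp only [sub_zero, one_mul, zero_mul, add_zero, binEntropy_zero] at hlim
  refine hlim.congr' ?_
  filter_upwards [Ioo_mem_nhdsGT zero_lt_one] with ε hε
  exact (posteriorMutualInfo_clusteringPosterior hS (Ioo_subset_Icc_self hε)).symm

end ClusteringPosterior

theorem mi_difference_limit_sharp_boundary_general {Ω : Type*} [MeasurableSpace Ω]
    (μ : Measure Ω) [IsProbabilityMeasure μ] {A B : Set Ω} (hA : NullMeasurableSet A μ)
    (hB : NullMeasurableSet B μ) :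
    Tendsto (fun ε => posteriorMutualInfo μ (clusteringPosterior ε A) -
        posteriorMutualInfo μ (clusteringPosterior ε B))
      (𝓝[>] 0) (𝓝 (binEntropy (μ.real A) - binEntropy (μ.real B))) :=
  (tendsto_posteriorMutualInfo_clusteringPosterior hA).sub
    (tendsto_posteriorMutualInfo_clusteringPosterior hB)

/-- As the decision boundaries turn sharper (`ε → 0⁺`), the
difference of mutual informations between the correct boundary model (built on
`A` with `μ(A) = 1/2`) and the misplaced boundary model (built on `B` with
`μ(B) = β`) converges to `log 2 − H(β) = log 2 + β·log β + (1−β)·log(1−β)`;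
in particular for `β = 1/2` the two models have the same MI in the limit. -/
theorem mi_difference_limit_sharp_boundary
    {Ω : Type*} [MeasurableSpace Ω] (μ : Measure Ω) [IsProbabilityMeasure μ]
    (β : ℝ) (hβ : β ∈ Set.Ioo (0 : ℝ) 1)
    (A B : Set Ω) (hA : MeasurableSet A) (hB : MeasurableSet B)
    (hAμ : μ A = 1 / 2) (hBμ : μ B = ENNReal.ofReal β)
    (η : ℝ → Set Ω → Ω → ℝ)
    (hη : ∀ ε S x, η ε S x = (1 - ε) * S.indicator 1 x + ε * Sᶜ.indicator 1 x)
    (πS : ℝ → Set Ω → ℝ) (hπS : ∀ ε S, πS ε S = ∫ x, η ε S x ∂μ)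
    (I : ℝ → Set Ω → ℝ)
    (hI : ∀ ε S, I ε S = ∫ x, (η ε S x * Real.log (η ε S x / πS ε S)
        + (1 - η ε S x) * Real.log ((1 - η ε S x) / (1 - πS ε S))) ∂μ) :
    Tendsto (fun ε => I ε A - I ε B) (nhdsWithin 0 (Set.Ioi 0))
      (nhds (Real.log 2 + β * Real.log β + (1 - β) * Real.log (1 - β)))
    ∧ (β = 1 / 2 →
        Tendsto (fun ε => I ε A - I ε B) (nhdsWithin 0 (Set.Ioi 0)) (nhds 0)) := by
  obtain rfl : η = clusteringPosterior := by ext ε S x; exact hη ε S x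
  obtain rfl : πS = fun ε S => ∫ x, clusteringPosterior ε S x ∂μ := by ext ε S; exact hπS ε S
  obtain rfl : I = fun ε S => posteriorMutualInfo μ (clusteringPosterior ε S) := by
    ext ε S; exact hI ε S
  have hA' : μ.real A = 2⁻¹ := by simp [Measure.real, hAμ]
  have hB' : μ.real B = β := by simp [Measure.real, hBμ, hβ.1.le]
  have hlim :=
    mi_difference_limit_sharp_boundary_general μ hA.nullMeasurableSet hB.nullMeasurableSet
  rw [hA', hB', binEntropy_two_inv] at hlim
  constructor
  · convert hlim using 2
    rw [binEntropy_eq_negMulLog_add_negMulLog_one_sub, negMulLog, negMulLog]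
    ring
  · rintro rfl
    simpa using hlim
end

section
/- In the finite discriminative clustering setup, the one-vs-one squared Hellinger GEMINI equals twice the expected variance of the relative square-root certainty: ∑_{a=1}^K ∑_{b=1}^K π(a)·π(b)·H²(q_a, q_b) = 2·∑_{x∈X} p(x)·Var_{k∼π}(√(c(x,k)/π(k))), where Var_{k∼π}(v) = ∑_{k=1}^K π(k)·v(k)² − (∑_{k=1}^K π(k)·v(k))². -/
open Finset

/-!
The squared Hellinger distance is a sum over the points `x`, so the weighted sum of the pairwise
distances splits into one sum of squared differences `(√q_a(x) - √q_b(x))²` per point. The average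
squared difference of two independent draws is twice the variance, and the common factor `√p(x)` of
the `√q_k(x)` leaves that variance as `p(x)`.
-/

section WeightedVariance

variable {ι R : Type*} [CommRing R]

theorem sum_sum_mul_mul_sub_sq (s : Finset ι) (w v : ι → R) :
    ∑ a ∈ s, ∑ b ∈ s, w a * w b * (v a - v b) ^ 2 =
      2 * ((∑ k ∈ s, w k) * ∑ k ∈ s, w k * v k ^ 2 - (∑ k ∈ s, w k * v k) ^ 2) := by
  have expand (a b : ι) : w a * w b * (v a - v b) ^ 2 =
      w a * v a ^ 2 * w b + w a * (w b * v b ^ 2) - 2 * (w a * v a * (w b * v b)) := by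
    ring
  simp only [expand, sum_sub_distrib, sum_add_distrib, ← mul_sum, ← sum_mul]
  ring

variable [Fintype ι]

/-- The variance `Var_{k ∼ w}(v)` of `v` under weights `w`, as second moment minus squared mean.
It is meant for weights of total mass one, but this is not part of the definition. -/
def weightedVariance (w v : ι → R) : R :=
  ∑ k, w k * v k ^ 2 - (∑ k, w k * v k) ^ 2

theorem weightedVariance_const_mul (w v : ι → R) (r : R) :
    weightedVariance w (fun k => r * v k) = r ^ 2 * weightedVariance w v := by
  simp only [weightedVariance, mul_pow, mul_left_comm _ r, mul_left_comm _ (r ^ 2), ← mul_sum,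
    mul_sub]

theorem sum_sum_mul_mul_sub_sq_eq_two_mul_weightedVariance {w : ι → R} (hw : ∑ k, w k = 1)
    (v : ι → R) :
    ∑ a, ∑ b, w a * w b * (v a - v b) ^ 2 = 2 * weightedVariance w v := by
  rw [sum_sum_mul_mul_sub_sq, hw, one_mul, weightedVariance]

end WeightedVariance

theorem sum_sum_mul_of_forall_sum_eq_one {X ι R : Type*} [Fintype X] [Fintype ι]
    [NonAssocSemiring R] (p : X → R) {c : X → ι → R} (hc : ∀ x, ∑ k, c x k = 1) :
    ∑ k, ∑ x, p x * c x k = ∑ x, p x := by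
  rw [sum_comm]
  simp only [← mul_sum, hc, mul_one]

section Hellinger

variable {X ι : Type*} [Fintype X] [Fintype ι]

/-- The squared Hellinger distance `H²(r, s)` of two mass functions on a finite type, without the
factor `1 / 2` of the other common normalization. -/
noncomputable def sqHellinger (r s : X → ℝ) : ℝ :=
  ∑ x, (√(r x) - √(s x)) ^ 2

theorem sum_sum_mul_mul_sqHellinger {w : ι → ℝ} (hw : ∑ k, w k = 1) (q : ι → X → ℝ) :
    ∑ a, ∑ b, w a * w b * sqHellinger (q a) (q b) =
      2 * ∑ x, weightedVariance w (fun k => √(q k x)) := by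
  calc
    ∑ a, ∑ b, w a * w b * sqHellinger (q a) (q b)
      = ∑ a, ∑ b, ∑ x, w a * w b * (√(q a x) - √(q b x)) ^ 2 := by
        simp only [sqHellinger, mul_sum]
    _ = ∑ x, ∑ a, ∑ b, w a * w b * (√(q a x) - √(q b x)) ^ 2 := by
        rw [sum_comm (s := (univ : Finset X))]
        exact sum_congr rfl fun a _ => sum_comm
    _ = 2 * ∑ x, weightedVariance w (fun k => √(q k x)) := by
        rw [mul_sum]
        exact sum_congr rfl fun x _ => sum_sum_mul_mul_sub_sq_eq_two_mul_weightedVariance hw _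

theorem gemini_ovo_hellinger_eq_expected_variance_general {p : X → ℝ} (hp : ∀ x, 0 ≤ p x)
    {w : ι → ℝ} (hw : ∑ k, w k = 1) {f : X → ι → ℝ} (hf : ∀ x k, 0 ≤ f x k)
    {q : ι → X → ℝ} (hq : ∀ k x, q k x = p x * f x k) :
    ∑ a, ∑ b, w a * w b * sqHellinger (q a) (q b) =
      2 * ∑ x, p x * weightedVariance w (fun k => √(f x k)) := by
  have sqrt_q (k : ι) (x : X) : √(q k x) = √(p x) * √(f x k) := by
    rw [hq, Real.sqrt_mul' _ (hf x k)]
  simp only [sum_sum_mul_mul_sqHellinger hw, sqrt_q, weightedVariance_const_mul,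
    Real.sq_sqrt (hp _)]

end Hellinger

/-- In the finite discriminative clustering setup, the one-vs-one
squared Hellinger GEMINI equals twice the expected variance (over `k ∼ π`) of the
relative square-root certainty `√(c(x,k)/π(k))`. -/
theorem gemini_ovo_hellinger_eq_expected_variance
    {X : Type*} [Fintype X] [Nonempty X]
    (p : X → ℝ) (hp : ∀ x, 0 < p x) (hp1 : ∑ x, p x = 1)
    (K : ℕ) (hK : 0 < K)
    (c : X → Fin K → ℝ) (hc : ∀ x k, 0 ≤ c x k) (hc1 : ∀ x, ∑ k, c x k = 1)
    (pr : Fin K → ℝ) (hpr : ∀ k, pr k = ∑ x, p x * c x k) (hprpos : ∀ k, 0 < pr k)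
    (q : Fin K → X → ℝ) (hq : ∀ k x, q k x = p x * c x k / pr k) :
    ∑ a, ∑ b, pr a * pr b * ∑ x, (Real.sqrt (q a x) - Real.sqrt (q b x)) ^ 2
      = 2 * ∑ x, p x *
          ((∑ k, pr k * (Real.sqrt (c x k / pr k)) ^ 2)
            - (∑ k, pr k * Real.sqrt (c x k / pr k)) ^ 2) := by
  have sum_pr : ∑ k, pr k = 1 := by
    simp only [hpr, sum_sum_mul_of_forall_sum_eq_one p hc1, hp1]
  exact gemini_ovo_hellinger_eq_expected_variance_general (fun x => (hp x).le) sum_pr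
    (fun x k => div_nonneg (hc x k) (hprpos k).le) fun k x => by rw [hq, mul_div_assoc]
end

section
/- Let K be a positive integer, α ∈ (0,2) with α ≠ 1, and π : Fin K → ℝ with π(k) ≥ 0 for all k and ∑_{k=1}^K π(k) = 1. Then the Proposition-1 upper bound on the one-vs-all α-divergence GEMINI is maximal for balanced proportions: (α(α−1))^{-1}·(−1 + ∑_{k=1}^K π(k)^{2−α}) ≤ (α(α−1))^{-1}·(K^{α−1} − 1), with the right-hand side attained when π(k) = 1/K for all k. -/
open Finset

/-!
Up to the positive factor `α⁻¹`, the bound is the Tsallis entropy of order `q = 2 - α` of the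
cluster proportions. By Jensen's inequality for `x ↦ x ^ q`, convex when `1 ≤ q` and concave when
`0 ≤ q ≤ 1`, the power sum `∑ π(k) ^ q` is extremal at the uniform distribution, and the sign of
`q - 1` in the entropy turns both cases into a maximum.
-/

theorem mul_inv_rpow_eq_rpow_one_sub {x : ℝ} (hx : 0 < x) (q : ℝ) :
    x * x⁻¹ ^ q = x ^ (1 - q) := by
  rw [Real.inv_rpow hx.le, Real.rpow_sub hx, Real.rpow_one, div_eq_mul_inv]

section TsallisEntropy

variable {ι : Type*} {s : Finset ι} {p : ι → ℝ} {q : ℝ}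

theorem card_rpow_mul_rpow_sum_le_sum_rpow (hq : 1 ≤ q) (hp : ∀ i ∈ s, 0 ≤ p i) :
    (#s : ℝ) ^ (1 - q) * (∑ i ∈ s, p i) ^ q ≤ ∑ i ∈ s, p i ^ q := by
  rcases s.eq_empty_or_nonempty with rfl | hs
  · simp [Real.zero_rpow (zero_lt_one.trans_le hq).ne']
  have hcard : (0 : ℝ) < #s := mod_cast hs.card_pos
  rw [← neg_sub q 1, Real.rpow_neg hcard.le, inv_mul_le_iff₀ (Real.rpow_pos_of_pos hcard _)]
  exact Real.rpow_sum_le_const_mul_sum_rpow_of_nonneg s hq hp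

theorem sum_rpow_le_card_rpow_mul_rpow_sum (hq₀ : 0 ≤ q) (hq₁ : q ≤ 1)
    (hp : ∀ i ∈ s, 0 ≤ p i) :
    ∑ i ∈ s, p i ^ q ≤ (#s : ℝ) ^ (1 - q) * (∑ i ∈ s, p i) ^ q := by
  rcases s.eq_empty_or_nonempty with rfl | hs
  · rw [sum_empty]
    positivity
  have hcard : (0 : ℝ) < #s := mod_cast hs.card_pos
  have jensen : (#s : ℝ)⁻¹ * ∑ i ∈ s, p i ^ q ≤ ((#s : ℝ)⁻¹ * ∑ i ∈ s, p i) ^ q := by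
    simpa only [smul_eq_mul, ← mul_sum] using
      (Real.concaveOn_rpow hq₀ hq₁).le_map_sum (w := fun _ ↦ (#s : ℝ)⁻¹)
        (fun _ _ ↦ by positivity) (by simp [hcard.ne']) hp
  rwa [Real.mul_rpow (inv_nonneg.2 hcard.le) (sum_nonneg hp), inv_mul_le_iff₀ hcard,
    ← mul_assoc, mul_inv_rpow_eq_rpow_one_sub hcard] at jensen

/-- The Tsallis entropy of order `q` of the weights `p` on `s`, a one-parameter deformation of
Shannon entropy. At `q = 1`, where the literature takes the Shannon limit, division by zero makes
it `0`. -/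
noncomputable def tsallisEntropy (q : ℝ) (s : Finset ι) (p : ι → ℝ) : ℝ :=
  (1 - ∑ i ∈ s, p i ^ q) / (q - 1)

theorem tsallisEntropy_le (hq₀ : 0 ≤ q) (hp : ∀ i ∈ s, 0 ≤ p i)
    (hsum : ∑ i ∈ s, p i = 1) :
    tsallisEntropy q s p ≤ (1 - (#s : ℝ) ^ (1 - q)) / (q - 1) := by
  rcases le_total q 1 with hq | hq
  · have hle : ∑ i ∈ s, p i ^ q ≤ (#s : ℝ) ^ (1 - q) := by
      simpa [hsum] using sum_rpow_le_card_rpow_mul_rpow_sum hq₀ hq hp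
    exact div_le_div_of_nonpos_of_le (sub_nonpos.2 hq) (by gcongr)
  · have hle : (#s : ℝ) ^ (1 - q) ≤ ∑ i ∈ s, p i ^ q := by
      simpa [hsum] using card_rpow_mul_rpow_sum_le_sum_rpow hq hp
    exact div_le_div_of_nonneg_right (by gcongr) (sub_nonneg.2 hq)

theorem tsallisEntropy_eq_of_forall_eq_inv_card (hs : s.Nonempty)
    (hp : ∀ i ∈ s, p i = (#s : ℝ)⁻¹) :
    tsallisEntropy q s p = (1 - (#s : ℝ) ^ (1 - q)) / (q - 1) := by
  have hsum : ∑ i ∈ s, p i ^ q = (#s : ℝ) ^ (1 - q) := by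
    rw [sum_congr rfl fun i hi ↦ by rw [hp i hi], sum_const, nsmul_eq_mul,
      mul_inv_rpow_eq_rpow_one_sub (mod_cast hs.card_pos)]
  rw [tsallisEntropy, hsum]

end TsallisEntropy

theorem inv_mul_neg_one_add_eq_inv_mul_div (α x : ℝ) :
    (α * (α - 1))⁻¹ * (-1 + x) = α⁻¹ * ((1 - x) / (2 - α - 1)) := by
  rw [show 2 - α - 1 = -(α - 1) by ring, ← neg_sub x 1, neg_div_neg_eq, mul_inv]
  ring

/-- For `α ∈ (0,2)`, `α ≠ 1`, and cluster proportions `π`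
(nonnegative, summing to 1), the Proposition-1 upper bound
`(α(α−1))⁻¹·(−1 + ∑ₖ π(k)^{2−α})` on the one-vs-all α-divergence GEMINI is maximal
for balanced proportions, with maximum `(α(α−1))⁻¹·(K^{α−1} − 1)` attained when
`π(k) = 1/K` for all `k`. -/
theorem gemini_alpha_bound_maximal_for_balanced
    (K : ℕ) (hK : 0 < K)
    (α : ℝ) (hα : α ∈ Set.Ioo (0 : ℝ) 2) (hα1 : α ≠ 1)
    (pr : Fin K → ℝ) (hpr0 : ∀ k, 0 ≤ pr k) (hpr1 : ∑ k, pr k = 1) :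
    ((α * (α - 1))⁻¹ * (-1 + ∑ k, pr k ^ (2 - α))
        ≤ (α * (α - 1))⁻¹ * ((K : ℝ) ^ (α - 1) - 1))
    ∧ ((∀ k, pr k = 1 / K) →
        (α * (α - 1))⁻¹ * (-1 + ∑ k, pr k ^ (2 - α))
          = (α * (α - 1))⁻¹ * ((K : ℝ) ^ (α - 1) - 1)) := by
  have bound_eq : (α * (α - 1))⁻¹ * (-1 + ∑ k, pr k ^ (2 - α))
      = α⁻¹ * tsallisEntropy (2 - α) univ pr := inv_mul_neg_one_add_eq_inv_mul_div ..
  have balanced_eq : (α * (α - 1))⁻¹ * ((K : ℝ) ^ (α - 1) - 1)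
      = α⁻¹ * ((1 - (#(univ : Finset (Fin K)) : ℝ) ^ (1 - (2 - α))) / (2 - α - 1)) := by
    rw [card_fin, ← inv_mul_neg_one_add_eq_inv_mul_div]
    ring_nf
  rw [bound_eq, balanced_eq]
  constructor
  · exact mul_le_mul_of_nonneg_left
      (tsallisEntropy_le (sub_nonneg.2 hα.2.le) (fun k _ ↦ hpr0 k) hpr1) (inv_nonneg.2 hα.1.le)
  · intro hbalanced
    have hne : (univ : Finset (Fin K)).Nonempty := ⟨⟨0, hK⟩, mem_univ _⟩
    rw [tsallisEntropy_eq_of_forall_eq_inv_card hne fun k _ ↦ by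
      rw [hbalanced k, card_fin, one_div]]
end
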